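/- The Euler characteristic of the real Grassmannian Gr(k,n) equals the binomial coefficient C(⌊n/2⌋, ⌊k/2⌋) when (k,n) is of the form (2j,2m), (2j,2m+1), or (2j+1,2m+1), and equals 0 when (k,n) = (2j+1, 2m). -/

import Mathlib

open CategoryTheory Polynomial

/-- The singular chain complex of a topological space `X` with coefficients in `R`,
i.e. the alternating face map complex of the free simplicial `R`-module on the
singular simplicial set of `X`. -/
noncomputable def singularChainComplex (R : Type) [CommRing R] (X : TopCat) :
    ChainComplex (ModuleCat R) ℕ :=
  (AlgebraicTopology.alternatingFaceMapComplex (ModuleCat R)).obj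
    (TopCat.toSSet.obj X ⋙ ModuleCat.free R)

/-- Singular cohomology of `X` with coefficients in `R`, the homology of the dual
cochain complex `Hom(C_•(X; R), R)`. -/
noncomputable def singularCohomology (R : Type) [CommRing R] (X : TopCat) (n : ℕ) :
    ModuleCat R :=
  (((((linearYoneda R (ModuleCat R)).obj (ModuleCat.of R R)).mapHomologicalComplex _).obj
    (singularChainComplex R X).op)).homology n


/-- The setoid on linearly independent `k`-frames in `ℝⁿ` identifying frames with the
same span. -/
def grassSetoid (k n : ℕ) :
    Setoid {A : Fin k → (Fin n → ℝ) // LinearIndependent ℝ A} :=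
  Setoid.ker fun A => Submodule.span ℝ (Set.range (A.1))

/-- The real Grassmann manifold `Gr(k, n)` of `k`-dimensional linear subspaces of `ℝⁿ`,
topologized as the quotient of the space of linearly independent `k`-frames. -/
def Grassmannian (k n : ℕ) : Type := _root_.Quotient (grassSetoid k n)

noncomputable instance (k n : ℕ) : TopologicalSpace (Grassmannian k n) :=
  inferInstanceAs (TopologicalSpace (_root_.Quotient _))

/-- The `q`-integer `[r]_q = 1 + q + ⋯ + q^(r-1)` as a polynomial in `q`. -/
noncomputable def qInt (r : ℕ) : Polynomial ℤ := ∑ i ∈ Finset.range r, X ^ i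

/-- The `q`-factorial `[r]_q! = [r]_q [r-1]_q ⋯ [1]_q`. -/
noncomputable def qFact : ℕ → Polynomial ℤ
  | 0 => 1
  | r + 1 => qInt (r + 1) * qFact r

/-!
Call the Euler characteristic of a space the alternating sum of its homology ranks over a field.
Barycentric subdivision shows that the chains that are small with respect to an open cover
compute homology, so by Mayer–Vietoris `χ(U ∪ V) = χ(U) + χ(V) - χ(U ∩ V)` for open `U` and `V`.

The open sets on which a Plücker coordinate does not vanish are affine charts covering `Gr(k, n)`.
Adjoin them in the order of the binary numbers whose digits are the indicators of the sets of
columns `I`. In the chart of `I`, the points already covered form the complement of a linear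
subspace, the Schubert cell of `I`, whose codimension is the number `inv I` of pairs `b < a` with
`a ∈ I` and `b ∉ I`. This complement is empty or homotopy equivalent to a sphere of dimension
`inv I - 1`, so the step adds `1 - (1 - (-1) ^ inv I) = (-1) ^ inv I` to the Euler characteristic.
Hence `χ(Gr(k, n)) = ∑ I, (-1) ^ inv I`, the Gaussian binomial coefficient of `n` and `k` at
`q = -1`, which the `q`-Pascal recursion evaluates. Over a field, cohomology is dual to homology.
-/

lemma linearMap_ext_single_one {R α M : Type*} [Semiring R] [AddCommMonoid M] [Module R M]
    {f g : (α →₀ R) →ₗ[R] M} (h : ∀ a, f (Finsupp.single a 1) = g (Finsupp.single a 1)) : f = g :=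
  Finsupp.lhom_ext' fun a => LinearMap.ext_ring (h a)

section OrderedChains

/-- The module of ordered chains on `E` in degree `n`, free on the `n`-tuples. The empty tuple in
degree `0` makes the complex augmented. -/
abbrev OrderedChain (R E : Type*) [CommRing R] (n : ℕ) : Type _ := (Fin n → E) →₀ R

variable (R : Type*) [CommRing R] {E E' : Type*}

/-- The boundary map of the augmented complex of ordered chains: the alternating sum over the
omission of one vertex. -/
noncomputable def orderedBoundary (E : Type*) (n : ℕ) :
    OrderedChain R E (n + 1) →ₗ[R] OrderedChain R E n :=
  ∑ i : Fin (n + 1), (-1 : R) ^ (i : ℕ) • Finsupp.lmapDomain R R (· ∘ i.succAbove)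

/-- The cone with apex `b` over an ordered chain: `b` is prepended to every tuple. -/
noncomputable def orderedCone (b : E) (n : ℕ) :
    OrderedChain R E n →ₗ[R] OrderedChain R E (n + 1) :=
  Finsupp.lmapDomain R R (Fin.cons (α := fun _ => E) b)

/-- The map induced on ordered chains by a map of vertices. -/
noncomputable def orderedMap (f : E → E') (n : ℕ) :
    OrderedChain R E n →ₗ[R] OrderedChain R E' n :=
  Finsupp.lmapDomain R R (f ∘ ·)

variable {R}

lemma orderedBoundary_single {n : ℕ} (v : Fin (n + 1) → E) :
    orderedBoundary R E n (Finsupp.single v 1) =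
      ∑ i : Fin (n + 1), (-1 : R) ^ (i : ℕ) • Finsupp.single (v ∘ i.succAbove) 1 := by
  simp [orderedBoundary]

lemma orderedCone_single (b : E) {n : ℕ} (v : Fin n → E) :
    orderedCone R b n (Finsupp.single v 1) = Finsupp.single (Fin.cons b v : Fin (n + 1) → E) 1 := by
  simp [orderedCone]

lemma orderedMap_single (f : E → E') {n : ℕ} (v : Fin n → E) :
    orderedMap R f n (Finsupp.single v 1) = Finsupp.single (f ∘ v) 1 := by
  simp [orderedMap]

lemma orderedBoundary_comp_orderedCone_zero (b : E) :
    orderedBoundary R E 0 ∘ₗ orderedCone R b 0 = LinearMap.id := by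
  refine linearMap_ext_single_one fun v => ?_
  simp [orderedCone_single, orderedBoundary_single, Subsingleton.elim _ v]

lemma orderedBoundary_comp_orderedCone_succ (b : E) (n : ℕ) :
    orderedBoundary R E (n + 1) ∘ₗ orderedCone R b (n + 1) =
      LinearMap.id - orderedCone R b n ∘ₗ orderedBoundary R E n := by
  refine linearMap_ext_single_one fun v => ?_
  have cons_comp_succAbove_succ (i : Fin (n + 1)) :
      (Fin.cons b v : Fin (n + 2) → E) ∘ i.succ.succAbove = Fin.cons b (v ∘ i.succAbove) := by
    funext j
    refine Fin.cases ?_ (fun j => ?_) j <;> simp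
  simp [-Finsupp.smul_single, orderedCone_single, orderedBoundary_single,
    Fin.sum_univ_succ (n := n + 1), cons_comp_succAbove_succ, pow_succ, sub_eq_add_neg]

-- Every simplex of positive dimension is a cone, so `∂∂ = 0` follows from the cone formula.
lemma orderedBoundary_comp_orderedBoundary (n : ℕ) :
    orderedBoundary R E n ∘ₗ orderedBoundary R E (n + 1) = 0 := by
  have single_eq_cone {m : ℕ} (v : Fin (m + 1) → E) :
      Finsupp.single v (1 : R) = orderedCone R (v 0) m (Finsupp.single (Fin.tail v) 1) := by
    rw [orderedCone_single, Fin.cons_self_tail]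
  induction n with
  | zero =>
    refine linearMap_ext_single_one fun v => ?_
    rw [single_eq_cone, ← LinearMap.comp_apply, LinearMap.comp_assoc,
      orderedBoundary_comp_orderedCone_succ, LinearMap.comp_sub, ← LinearMap.comp_assoc,
      orderedBoundary_comp_orderedCone_zero]
    simp
  | succ n ih =>
    refine linearMap_ext_single_one fun v => ?_
    rw [single_eq_cone, ← LinearMap.comp_apply, LinearMap.comp_assoc,
      orderedBoundary_comp_orderedCone_succ, LinearMap.comp_sub, ← LinearMap.comp_assoc,
      orderedBoundary_comp_orderedCone_succ, LinearMap.sub_comp, LinearMap.comp_assoc, ih]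
    simp

lemma orderedBoundary_orderedBoundary {n : ℕ} (x : OrderedChain R E (n + 2)) :
    orderedBoundary R E n (orderedBoundary R E (n + 1) x) = 0 :=
  LinearMap.congr_fun (orderedBoundary_comp_orderedBoundary n) x

section Subdivision

variable (R) (β : ∀ n, (Fin (n + 1) → E) → E)

/-- Subdivision of ordered chains, where `β` chooses the centre of each simplex. -/
noncomputable def orderedSd : ∀ n, OrderedChain R E n →ₗ[R] OrderedChain R E n
  | 0 => LinearMap.id
  | n + 1 => Finsupp.linearCombination R fun v =>
      orderedCone R (β n v) n (orderedSd n (orderedBoundary R E n (Finsupp.single v 1)))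

/-- The chain homotopy between the identity and the subdivision of ordered chains. -/
noncomputable def orderedSdHomotopy : ∀ n, OrderedChain R E n →ₗ[R] OrderedChain R E (n + 1)
  | 0 => 0
  | n + 1 => Finsupp.linearCombination R fun v =>
      orderedCone R (β n v) (n + 1) (Finsupp.single v 1 -
        orderedSdHomotopy n (orderedBoundary R E n (Finsupp.single v 1)))

variable {R}

lemma orderedSd_succ_single {n : ℕ} (v : Fin (n + 1) → E) :
    orderedSd R β (n + 1) (Finsupp.single v 1) =
      orderedCone R (β n v) n (orderedSd R β n (orderedBoundary R E n (Finsupp.single v 1))) := by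
  simp [orderedSd]

lemma orderedSdHomotopy_succ_single {n : ℕ} (v : Fin (n + 1) → E) :
    orderedSdHomotopy R β (n + 1) (Finsupp.single v 1) =
      orderedCone R (β n v) (n + 1) (Finsupp.single v 1 -
        orderedSdHomotopy R β n (orderedBoundary R E n (Finsupp.single v 1))) := by
  simp [orderedSdHomotopy]

lemma orderedBoundary_comp_orderedSd (n : ℕ) :
    orderedBoundary R E n ∘ₗ orderedSd R β (n + 1) =
      orderedSd R β n ∘ₗ orderedBoundary R E n := by
  induction n with
  | zero =>
    refine linearMap_ext_single_one fun v => ?_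
    rw [LinearMap.comp_apply, orderedSd_succ_single]
    exact LinearMap.congr_fun (orderedBoundary_comp_orderedCone_zero _) _
  | succ n ih =>
    refine linearMap_ext_single_one fun v => ?_
    have sd_boundary_cycle : orderedBoundary R E n (orderedSd R β (n + 1)
        (orderedBoundary R E (n + 1) (Finsupp.single v 1))) = 0 := by
      rw [← LinearMap.comp_apply, ih, LinearMap.comp_apply, orderedBoundary_orderedBoundary,
        map_zero]
    rw [LinearMap.comp_apply, orderedSd_succ_single, ← LinearMap.comp_apply,
      orderedBoundary_comp_orderedCone_succ]
    simp [sd_boundary_cycle]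

lemma orderedBoundary_comp_orderedSdHomotopy (n : ℕ) :
    orderedBoundary R E (n + 1) ∘ₗ orderedSdHomotopy R β (n + 1) =
      LinearMap.id - orderedSd R β (n + 1) - orderedSdHomotopy R β n ∘ₗ orderedBoundary R E n := by
  induction n with
  | zero =>
    refine linearMap_ext_single_one fun v => ?_
    rw [LinearMap.comp_apply, orderedSdHomotopy_succ_single, ← LinearMap.comp_apply,
      orderedBoundary_comp_orderedCone_succ]
    simp [orderedSdHomotopy, orderedSd]
  | succ n ih =>
    refine linearMap_ext_single_one fun v => ?_
    have boundary_homotopy_boundary : orderedBoundary R E (n + 1) (orderedSdHomotopy R β (n + 1)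
        (orderedBoundary R E (n + 1) (Finsupp.single v 1))) =
        orderedBoundary R E (n + 1) (Finsupp.single v 1) -
          orderedSd R β (n + 1) (orderedBoundary R E (n + 1) (Finsupp.single v 1)) := by
      rw [← LinearMap.comp_apply, ih]
      simp [orderedBoundary_orderedBoundary]
    rw [LinearMap.comp_apply, orderedSdHomotopy_succ_single, ← LinearMap.comp_apply,
      orderedBoundary_comp_orderedCone_succ]
    simp only [LinearMap.sub_apply, LinearMap.id_apply, LinearMap.comp_apply, map_sub,
      boundary_homotopy_boundary, orderedSd_succ_single]
    abel

end Subdivision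

section Naturality

lemma orderedBoundary_comp_orderedMap (f : E → E') (n : ℕ) :
    orderedBoundary R E' n ∘ₗ orderedMap R f (n + 1) =
      orderedMap R f n ∘ₗ orderedBoundary R E n := by
  refine linearMap_ext_single_one fun v => ?_
  simp [-Finsupp.smul_single, orderedBoundary_single, orderedMap_single, Function.comp_assoc]

lemma orderedMap_orderedCone (f : E → E') (b : E) {n : ℕ} (x : OrderedChain R E n) :
    orderedMap R f (n + 1) (orderedCone R b n x) = orderedCone R (f b) n (orderedMap R f n x) := by
  rw [← LinearMap.comp_apply, ← LinearMap.comp_apply]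
  congr 1
  refine linearMap_ext_single_one fun v => ?_
  simp [orderedMap_single, orderedCone_single, Fin.comp_cons]

variable {β : ∀ n, (Fin (n + 1) → E) → E} {β' : ∀ n, (Fin (n + 1) → E') → E'} {f : E → E'}

lemma orderedSd_comp_orderedMap (hf : ∀ n v, f (β n v) = β' n (f ∘ v)) (n : ℕ) :
    orderedSd R β' n ∘ₗ orderedMap R f n = orderedMap R f n ∘ₗ orderedSd R β n := by
  induction n with
  | zero => rfl
  | succ n ih =>
    refine linearMap_ext_single_one fun v => ?_
    have sd_boundary : orderedSd R β' n (orderedBoundary R E' n (Finsupp.single (f ∘ v) 1)) =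
        orderedMap R f n (orderedSd R β n (orderedBoundary R E n (Finsupp.single v 1))) := by
      rw [← orderedMap_single, ← LinearMap.comp_apply (orderedBoundary R E' n),
        orderedBoundary_comp_orderedMap]
      exact LinearMap.congr_fun ih _
    simp only [LinearMap.comp_apply, orderedMap_single, orderedSd_succ_single,
      orderedMap_orderedCone, hf, sd_boundary]

lemma orderedSdHomotopy_comp_orderedMap (hf : ∀ n v, f (β n v) = β' n (f ∘ v)) (n : ℕ) :
    orderedSdHomotopy R β' n ∘ₗ orderedMap R f n =
      orderedMap R f (n + 1) ∘ₗ orderedSdHomotopy R β n := by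
  induction n with
  | zero => simp [orderedSdHomotopy]
  | succ n ih =>
    refine linearMap_ext_single_one fun v => ?_
    have homotopy_boundary :
        orderedSdHomotopy R β' n (orderedBoundary R E' n (Finsupp.single (f ∘ v) 1)) =
          orderedMap R f (n + 1)
            (orderedSdHomotopy R β n (orderedBoundary R E n (Finsupp.single v 1))) := by
      rw [← orderedMap_single, ← LinearMap.comp_apply (orderedBoundary R E' n),
        orderedBoundary_comp_orderedMap]
      exact LinearMap.congr_fun ih _
    simp only [LinearMap.comp_apply, orderedMap_single, orderedSdHomotopy_succ_single,
      orderedMap_orderedCone, hf, map_sub, homotopy_boundary]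

end Naturality

end OrderedChains

section SingularChains

section AffineSimplex

variable {n m l : ℕ}

/-- The affine map between standard simplices with prescribed images of the vertices. -/
noncomputable def affineSimplex (v : Fin n → stdSimplex ℝ (Fin m)) :
    C(stdSimplex ℝ (Fin n), stdSimplex ℝ (Fin m)) where
  toFun w := ⟨∑ i, w i • (v i).1, (convex_stdSimplex ℝ _).sum_mem
    (fun i _ => w.2.1 i) (stdSimplex.sum_eq_one w) fun i _ => (v i).2⟩
  continuous_toFun := by
    refine Continuous.subtype_mk (continuous_finsetSum _ fun i _ => ?_) _
    exact ((continuous_apply i).comp continuous_subtype_val).smul continuous_const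

lemma coe_affineSimplex (v : Fin n → stdSimplex ℝ (Fin m)) (w : stdSimplex ℝ (Fin n)) :
    (affineSimplex v w).1 = ∑ i, w i • (v i).1 := rfl

lemma affineSimplex_apply (v : Fin n → stdSimplex ℝ (Fin m)) (w : stdSimplex ℝ (Fin n))
    (j : Fin m) : affineSimplex v w j = ∑ i, w i * v i j := by
  refine (congr_fun (coe_affineSimplex v w) j).trans ?_
  rw [Finset.sum_apply]
  rfl

lemma affineSimplex_vertex (v : Fin n → stdSimplex ℝ (Fin m)) (i : Fin n) :
    affineSimplex v (stdSimplex.vertex i) = v i := by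
  refine stdSimplex.ext (funext fun j => ?_)
  simp [affineSimplex_apply, Pi.single_apply]

lemma affineSimplex_vertices (n : ℕ) :
    affineSimplex (fun i : Fin n => stdSimplex.vertex i) = ContinuousMap.id _ := by
  refine ContinuousMap.ext fun w => stdSimplex.ext (funext fun j => ?_)
  simp [affineSimplex_apply, Pi.single_apply]

lemma affineSimplex_comp (u : Fin m → stdSimplex ℝ (Fin l)) (v : Fin n → stdSimplex ℝ (Fin m)) :
    (affineSimplex u).comp (affineSimplex v) = affineSimplex (affineSimplex u ∘ v) := by
  refine ContinuousMap.ext fun w => stdSimplex.ext (funext fun j => ?_)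
  simp only [ContinuousMap.comp_apply, affineSimplex_apply, Function.comp_apply, Finset.sum_mul,
    Finset.mul_sum]
  rw [Finset.sum_comm]
  simp only [mul_assoc]

/-- The inclusion of the `i`-th face of a standard simplex. -/
noncomputable def faceInclusion (i : Fin (n + 1)) :
    C(stdSimplex ℝ (Fin n), stdSimplex ℝ (Fin (n + 1))) :=
  ⟨stdSimplex.map i.succAbove, stdSimplex.continuous_map i.succAbove⟩

lemma affineSimplex_comp_faceInclusion (v : Fin (n + 1) → stdSimplex ℝ (Fin m))
    (i : Fin (n + 1)) :
    (affineSimplex v).comp (faceInclusion i) = affineSimplex (v ∘ i.succAbove) := by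
  have faceInclusion_eq :
      faceInclusion i = affineSimplex (fun j : Fin n => stdSimplex.vertex (i.succAbove j)) := by
    refine ContinuousMap.ext fun w => stdSimplex.ext (funext fun j => ?_)
    simp [faceInclusion, affineSimplex_apply, FunOnFinite.linearMap_apply_apply,
      Pi.single_apply, Finset.sum_filter, eq_comm]
  rw [faceInclusion_eq, affineSimplex_comp]
  congr 1
  exact funext fun j => affineSimplex_vertex _ _

/-- The barycentre of a simplex given by its vertices. -/
noncomputable def simplexCenter (n : ℕ) (v : Fin (n + 1) → stdSimplex ℝ (Fin m)) :
    stdSimplex ℝ (Fin m) :=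
  affineSimplex v stdSimplex.barycenter

lemma affineSimplex_simplexCenter (u : Fin m → stdSimplex ℝ (Fin l))
    (v : Fin (n + 1) → stdSimplex ℝ (Fin m)) :
    affineSimplex u (simplexCenter n v) = simplexCenter n (affineSimplex u ∘ v) :=
  DFunLike.congr_fun (affineSimplex_comp u v) _

end AffineSimplex

/-- The module of singular chains of `X` on the simplices with `n` vertices. The empty simplex in
degree `0` makes the complex augmented, and the usual `n`-chains sit in degree `n + 1`. -/
abbrev SingularChain (R X : Type*) [CommRing R] [TopologicalSpace X] (n : ℕ) : Type _ :=
  C(stdSimplex ℝ (Fin n), X) →₀ R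

variable (R : Type*) [CommRing R] {X : Type*} [TopologicalSpace X] {m l : ℕ}

/-- The boundary map of the augmented singular chain complex of `X`. -/
noncomputable def singularBoundary (X : Type*) [TopologicalSpace X] (n : ℕ) :
    SingularChain R X (n + 1) →ₗ[R] SingularChain R X n :=
  ∑ i : Fin (n + 1), (-1 : R) ^ (i : ℕ) • Finsupp.lmapDomain R R fun σ => σ.comp (faceInclusion i)

/-- The singular chain in `X` obtained from an ordered chain in a standard simplex by
a singular simplex of `X`. -/
noncomputable def realizeChain (σ : C(stdSimplex ℝ (Fin m), X)) (n : ℕ) :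
    OrderedChain R (stdSimplex ℝ (Fin m)) n →ₗ[R] SingularChain R X n :=
  Finsupp.lmapDomain R R fun v => σ.comp (affineSimplex v)

/-- The fundamental ordered chain of a standard simplex. -/
noncomputable def vertexChain (n : ℕ) : OrderedChain R (stdSimplex ℝ (Fin n)) n :=
  Finsupp.single (fun i => stdSimplex.vertex i) 1

/-- Barycentric subdivision of singular chains. -/
noncomputable def singularSd (X : Type*) [TopologicalSpace X] (n : ℕ) :
    SingularChain R X n →ₗ[R] SingularChain R X n :=
  Finsupp.linearCombination R fun σ =>
    realizeChain R σ n (orderedSd R simplexCenter n (vertexChain R n))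

/-- The chain homotopy between the identity and barycentric subdivision. -/
noncomputable def singularSdHomotopy (X : Type*) [TopologicalSpace X] (n : ℕ) :
    SingularChain R X n →ₗ[R] SingularChain R X (n + 1) :=
  Finsupp.linearCombination R fun σ =>
    realizeChain R σ (n + 1) (orderedSdHomotopy R simplexCenter n (vertexChain R n))

variable {R}

lemma singularBoundary_single {n : ℕ} (σ : C(stdSimplex ℝ (Fin (n + 1)), X)) :
    singularBoundary R X n (Finsupp.single σ 1) =
      ∑ i : Fin (n + 1), (-1 : R) ^ (i : ℕ) • Finsupp.single (σ.comp (faceInclusion i)) 1 := by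
  simp [singularBoundary]

lemma realizeChain_single {n : ℕ} (σ : C(stdSimplex ℝ (Fin m), X))
    (v : Fin n → stdSimplex ℝ (Fin m)) :
    realizeChain R σ n (Finsupp.single v 1) = Finsupp.single (σ.comp (affineSimplex v)) 1 := by
  simp [realizeChain]

lemma realizeChain_vertexChain {n : ℕ} (σ : C(stdSimplex ℝ (Fin n), X)) :
    realizeChain R σ n (vertexChain R n) = Finsupp.single σ 1 := by
  rw [vertexChain, realizeChain_single, affineSimplex_vertices, ContinuousMap.comp_id]

lemma orderedMap_affineSimplex_vertexChain {n : ℕ} (v : Fin n → stdSimplex ℝ (Fin m)) :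
    orderedMap R (affineSimplex v) n (vertexChain R n) = Finsupp.single v 1 := by
  rw [vertexChain, orderedMap_single]
  congr 1
  exact funext fun i => affineSimplex_vertex v i

lemma realizeChain_comp_affineSimplex {n : ℕ} (σ : C(stdSimplex ℝ (Fin l), X))
    (u : Fin m → stdSimplex ℝ (Fin l)) :
    realizeChain R (σ.comp (affineSimplex u)) n =
      realizeChain R σ n ∘ₗ orderedMap R (affineSimplex u) n := by
  refine linearMap_ext_single_one fun v => ?_
  simp [realizeChain_single, orderedMap_single, ContinuousMap.comp_assoc, affineSimplex_comp]

lemma singularBoundary_comp_realizeChain (σ : C(stdSimplex ℝ (Fin m), X)) (n : ℕ) :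
    singularBoundary R X n ∘ₗ realizeChain R σ (n + 1) =
      realizeChain R σ n ∘ₗ orderedBoundary R _ n := by
  refine linearMap_ext_single_one fun v => ?_
  simp [-Finsupp.smul_single, orderedBoundary_single, realizeChain_single,
    singularBoundary_single, ContinuousMap.comp_assoc, affineSimplex_comp_faceInclusion]

lemma singularSd_comp_realizeChain (σ : C(stdSimplex ℝ (Fin m), X)) (n : ℕ) :
    singularSd R X n ∘ₗ realizeChain R σ n =
      realizeChain R σ n ∘ₗ orderedSd R simplexCenter n := by
  refine linearMap_ext_single_one fun v => ?_
  have naturality := orderedSd_comp_orderedMap (R := R) (β' := simplexCenter)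
    (fun _ w => affineSimplex_simplexCenter v w) n
  simp only [LinearMap.comp_apply, realizeChain_single, singularSd,
    Finsupp.linearCombination_single, one_smul]
  rw [realizeChain_comp_affineSimplex, LinearMap.comp_apply,
    ← LinearMap.comp_apply (orderedMap R _ n), ← naturality, LinearMap.comp_apply,
    orderedMap_affineSimplex_vertexChain]

lemma singularSdHomotopy_comp_realizeChain (σ : C(stdSimplex ℝ (Fin m), X)) (n : ℕ) :
    singularSdHomotopy R X n ∘ₗ realizeChain R σ n =
      realizeChain R σ (n + 1) ∘ₗ orderedSdHomotopy R simplexCenter n := by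
  refine linearMap_ext_single_one fun v => ?_
  have naturality := orderedSdHomotopy_comp_orderedMap (R := R) (β' := simplexCenter)
    (fun _ w => affineSimplex_simplexCenter v w) n
  simp only [LinearMap.comp_apply, realizeChain_single, singularSdHomotopy,
    Finsupp.linearCombination_single, one_smul]
  rw [realizeChain_comp_affineSimplex, LinearMap.comp_apply,
    ← LinearMap.comp_apply (orderedMap R _ (n + 1)), ← naturality, LinearMap.comp_apply,
    orderedMap_affineSimplex_vertexChain]

-- Every singular simplex is the realization of the fundamental ordered chain, so an identity
-- between operators that commute with realizations need only be checked on ordered chains.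
lemma singularChain_linearMap_ext {n : ℕ} {M : Type*} [AddCommGroup M] [Module R M]
    {f g : SingularChain R X n →ₗ[R] M}
    (h : ∀ σ : C(stdSimplex ℝ (Fin n), X), f ∘ₗ realizeChain R σ n = g ∘ₗ realizeChain R σ n) :
    f = g :=
  linearMap_ext_single_one fun σ => by
    simpa only [LinearMap.comp_apply, realizeChain_vertexChain] using
      LinearMap.congr_fun (h σ) (vertexChain R n)

lemma singularBoundary_comp_singularBoundary (n : ℕ) :
    singularBoundary R X n ∘ₗ singularBoundary R X (n + 1) = 0 :=
  singularChain_linearMap_ext fun σ => by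
    rw [LinearMap.comp_assoc, singularBoundary_comp_realizeChain, ← LinearMap.comp_assoc,
      singularBoundary_comp_realizeChain, LinearMap.comp_assoc,
      orderedBoundary_comp_orderedBoundary, LinearMap.comp_zero, LinearMap.zero_comp]

lemma singularBoundary_comp_singularSd (n : ℕ) :
    singularBoundary R X n ∘ₗ singularSd R X (n + 1) =
      singularSd R X n ∘ₗ singularBoundary R X n :=
  singularChain_linearMap_ext fun σ => by
    rw [LinearMap.comp_assoc, singularSd_comp_realizeChain, ← LinearMap.comp_assoc,
      singularBoundary_comp_realizeChain, LinearMap.comp_assoc, orderedBoundary_comp_orderedSd,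
      ← LinearMap.comp_assoc, ← singularSd_comp_realizeChain, LinearMap.comp_assoc,
      ← singularBoundary_comp_realizeChain, LinearMap.comp_assoc]

lemma singularBoundary_comp_singularSdHomotopy (n : ℕ) :
    singularBoundary R X (n + 1) ∘ₗ singularSdHomotopy R X (n + 1) =
      LinearMap.id - singularSd R X (n + 1) -
        singularSdHomotopy R X n ∘ₗ singularBoundary R X n :=
  singularChain_linearMap_ext fun σ => by
    rw [LinearMap.comp_assoc, singularSdHomotopy_comp_realizeChain, ← LinearMap.comp_assoc,
      singularBoundary_comp_realizeChain, LinearMap.comp_assoc,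
      orderedBoundary_comp_orderedSdHomotopy]
    simp only [LinearMap.comp_sub, LinearMap.sub_comp, LinearMap.comp_id, LinearMap.id_comp,
      singularSd_comp_realizeChain, LinearMap.comp_assoc, singularBoundary_comp_realizeChain]
    rw [← LinearMap.comp_assoc (orderedBoundary R _ n), ← singularSdHomotopy_comp_realizeChain,
      LinearMap.comp_assoc]

end SingularChains

section SmallChains

lemma map_mem_of_mem_supported {R α M : Type*} [CommRing R] [AddCommGroup M] [Module R M]
    (f : (α →₀ R) →ₗ[R] M) {s : Set α} {N : Submodule R M}
    (h : ∀ a ∈ s, f (Finsupp.single a 1) ∈ N) {x : α →₀ R} (hx : x ∈ Finsupp.supported R R s) :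
    f x ∈ N := by
  suffices Finsupp.supported R R s ≤ N.comap f from this hx
  rw [Finsupp.supported_eq_span_single, Submodule.span_le]
  rintro _ ⟨a, ha, rfl⟩
  exact h a ha

lemma dist_affineSimplex_le {n m : ℕ} (v : Fin n → stdSimplex ℝ (Fin m))
    (w : stdSimplex ℝ (Fin n)) {p : stdSimplex ℝ (Fin m)} {c : ℝ} (hc : ∀ j, dist (v j) p ≤ c) :
    dist (affineSimplex v w) p ≤ c := by
  rw [Subtype.dist_eq, ← Metric.mem_closedBall, coe_affineSimplex]
  exact (convex_closedBall _ _).sum_mem (fun i _ => w.2.1 i) (stdSimplex.sum_eq_one w)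
    fun i _ => hc i

lemma dist_sum_inv_smul_le {E : Type*} [SeminormedAddCommGroup E] [NormedSpace ℝ E] {n : ℕ}
    (v : Fin (n + 1) → E) (j : Fin (n + 1)) {r : ℝ} (hr : ∀ i, dist (v i) (v j) ≤ r) :
    dist (∑ i, ((n : ℝ) + 1)⁻¹ • v i) (v j) ≤ n / (n + 1) * r := by
  have sub_eq : ∑ i, ((n : ℝ) + 1)⁻¹ • v i - v j =
      ((n : ℝ) + 1)⁻¹ • ∑ i : Fin n, (v (j.succAbove i) - v j) := by
    have : (n : ℝ) + 1 ≠ 0 := by positivity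
    rw [← Finset.smul_sum, Fin.sum_univ_succAbove _ j, Finset.sum_sub_distrib]
    simp only [Finset.sum_const, Finset.card_univ, Fintype.card_fin]
    match_scalars <;> field_simp
    ring
  rw [dist_eq_norm, sub_eq, norm_smul, Real.norm_of_nonneg (by positivity), div_eq_inv_mul,
    mul_assoc]
  gcongr
  calc ‖∑ i : Fin n, (v (j.succAbove i) - v j)‖
      ≤ ∑ _i : Fin n, r := norm_sum_le_of_le _ fun i _ => by
        rw [← dist_eq_norm]
        exact hr _
    _ = n * r := by simp

lemma dist_simplexCenter_le {n m : ℕ} (v : Fin (n + 1) → stdSimplex ℝ (Fin m)) (j : Fin (n + 1))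
    {r : ℝ} (hr : ∀ i, dist (v i) (v j) ≤ r) :
    dist (simplexCenter n v) (v j) ≤ n / (n + 1) * r := by
  have barycenter_eq (i : Fin (n + 1)) : stdSimplex.barycenter (𝕜 := ℝ) i = ((n : ℝ) + 1)⁻¹ :=
    (stdSimplex.barycenter_apply i).trans (by simp)
  rw [Subtype.dist_eq, simplexCenter, coe_affineSimplex]
  simp only [barycenter_eq]
  exact dist_sum_inv_smul_le (fun i => (v i).1) j hr

lemma dist_cons_le {α : Type*} [PseudoMetricSpace α] {n : ℕ} {p : α} {w : Fin n → α} {c : ℝ}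
    (hc : 0 ≤ c) (hp : ∀ i, dist (w i) p ≤ c) (hw : ∀ i j, dist (w i) (w j) ≤ c)
    (i j : Fin (n + 1)) :
    dist ((Fin.cons p w : Fin (n + 1) → α) i) ((Fin.cons p w : Fin (n + 1) → α) j) ≤ c := by
  refine Fin.cases (Fin.cases ?_ (fun j => ?_) j) (fun i => Fin.cases ?_ (fun j => ?_) j) i
  · simpa using hc
  · simpa [dist_comm] using hp j
  · simpa using hp i
  · simpa using hw i j

variable {R : Type*} [CommRing R]

lemma orderedSd_single_mem_supported {m n : ℕ} (v : Fin n → stdSimplex ℝ (Fin m)) {r : ℝ}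
    (hr₀ : 0 ≤ r) (hr : ∀ i j, dist (v i) (v j) ≤ r) :
    orderedSd R simplexCenter n (Finsupp.single v 1) ∈ Finsupp.supported R R
      {w | Set.range w ⊆ Set.range (affineSimplex v) ∧
        ∀ i j, dist (w i) (w j) ≤ (n - 1 : ℕ) / n * r} := by
  induction n with
  | zero =>
    refine Finsupp.single_mem_supported _ _ ⟨?_, fun i => i.elim0⟩
    simp [Set.range_eq_empty]
  | succ n ih =>
    have sd_boundary_mem : orderedSd R simplexCenter n
        (orderedBoundary R _ n (Finsupp.single v 1)) ∈ Finsupp.supported R R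
          {w | Set.range w ⊆ Set.range (affineSimplex v) ∧
            ∀ i j, dist (w i) (w j) ≤ n / (n + 1) * r} := by
      rw [orderedBoundary_single, map_sum]
      refine Submodule.sum_mem _ fun i _ => ?_
      rw [map_smul]
      refine Submodule.smul_mem _ _
        (Finsupp.supported_mono ?_ (ih (v ∘ i.succAbove) fun _ _ => hr _ _))
      rintro w ⟨hw, hwr⟩
      refine ⟨hw.trans ?_, fun a b => (hwr a b).trans ?_⟩
      · rw [← affineSimplex_comp_faceInclusion, ContinuousMap.coe_comp]
        exact Set.range_comp_subset_range _ _
      · have hn : 0 < n := a.pos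
        refine mul_le_mul_of_nonneg_right ?_ hr₀
        rw [div_le_div_iff₀ (by positivity) (by positivity), Nat.cast_pred hn]
        linarith
    rw [orderedSd_succ_single]
    refine map_mem_of_mem_supported _ ?_ sd_boundary_mem
    rintro w ⟨hw, hwr⟩
    rw [orderedCone_single]
    refine Finsupp.single_mem_supported _ _ ⟨?_, ?_⟩
    · rw [Fin.range_cons]
      exact Set.insert_subset ⟨_, rfl⟩ hw
    · push_cast
      refine dist_cons_le (by positivity) (fun i => ?_) hwr
      obtain ⟨p, hp⟩ := hw ⟨i, rfl⟩
      rw [← hp]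
      exact dist_affineSimplex_le v p fun j => by
        rw [dist_comm]
        exact dist_simplexCenter_le v j fun _ => hr _ _

lemma orderedSd_pow_single_mem_supported {m n : ℕ} (v : Fin n → stdSimplex ℝ (Fin m)) {r : ℝ}
    (hr₀ : 0 ≤ r) (hr : ∀ i j, dist (v i) (v j) ≤ r) (k : ℕ) :
    (orderedSd R simplexCenter n ^ k) (Finsupp.single v 1) ∈ Finsupp.supported R R
      {w | ∀ i j, dist (w i) (w j) ≤ ((n - 1 : ℕ) / n) ^ k * r} := by
  induction k with
  | zero => exact Finsupp.single_mem_supported _ _ (by simpa using hr)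
  | succ k ih =>
    rw [pow_succ' (orderedSd R _ n), Module.End.mul_apply]
    refine map_mem_of_mem_supported _ (fun w hw => ?_) ih
    refine Finsupp.supported_mono ?_ (orderedSd_single_mem_supported w (by positivity) hw)
    rintro w' ⟨-, hw'⟩
    rw [Set.mem_ofPred_eq, pow_succ', mul_assoc]
    exact hw'

variable {X : Type*} [TopologicalSpace X]

/-- The singular chains whose simplices each lie in some member of the family `U`. -/
def smallChains (R : Type*) [CommRing R] {ι : Sort*} (U : ι → Set X) (n : ℕ) :
    Submodule R (SingularChain R X n) :=
  Finsupp.supported R R {σ | ∃ i, Set.range σ ⊆ U i}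

variable {ι : Sort*} {U : ι → Set X} {n : ℕ}

lemma realizeChain_mem_smallChains {m : ℕ} {σ : C(stdSimplex ℝ (Fin m), X)} {i : ι}
    (hσ : Set.range σ ⊆ U i) (x : OrderedChain R (stdSimplex ℝ (Fin m)) n) :
    realizeChain R σ n x ∈ smallChains R U n := by
  refine map_mem_of_mem_supported (s := Set.univ) _ (fun v _ => ?_) (by simp)
  rw [realizeChain_single]
  exact Finsupp.single_mem_supported _ _
    ⟨i, (Set.range_comp_subset_range (affineSimplex v) σ).trans hσ⟩

lemma map_mem_smallChains_of_comp_realizeChain {m : ℕ}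
    {f : SingularChain R X n →ₗ[R] SingularChain R X m}
    {g : OrderedChain R (stdSimplex ℝ (Fin n)) n →ₗ[R] OrderedChain R (stdSimplex ℝ (Fin n)) m}
    (hfg : ∀ σ, f ∘ₗ realizeChain R σ n = realizeChain R σ m ∘ₗ g) {x : SingularChain R X n}
    (hx : x ∈ smallChains R U n) : f x ∈ smallChains R U m := by
  refine map_mem_of_mem_supported _ (fun σ hσ => ?_) hx
  obtain ⟨i, hσ⟩ := hσ
  rw [← realizeChain_vertexChain, ← LinearMap.comp_apply, hfg]
  exact realizeChain_mem_smallChains hσ _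

lemma singularBoundary_mem_smallChains {x : SingularChain R X (n + 1)}
    (hx : x ∈ smallChains R U (n + 1)) : singularBoundary R X n x ∈ smallChains R U n :=
  map_mem_smallChains_of_comp_realizeChain
    (fun σ => singularBoundary_comp_realizeChain σ n) hx

lemma singularSdHomotopy_mem_smallChains {x : SingularChain R X n}
    (hx : x ∈ smallChains R U n) : singularSdHomotopy R X n x ∈ smallChains R U (n + 1) :=
  map_mem_smallChains_of_comp_realizeChain
    (fun σ => singularSdHomotopy_comp_realizeChain σ n) hx

lemma singularSd_pow_mem_smallChains {x : SingularChain R X n} (hx : x ∈ smallChains R U n)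
    (k : ℕ) : (singularSd R X n ^ k) x ∈ smallChains R U n :=
  Submodule.le_comap_pow_of_le_comap _ (fun _ => map_mem_smallChains_of_comp_realizeChain
    fun σ => singularSd_comp_realizeChain σ n) k hx

-- A simplex of the subdivision that is small compared with a Lebesgue number of the pulled back
-- cover lies in a single member of the cover.
lemma realizeChain_single_mem_smallChains {m : ℕ} (σ : C(stdSimplex ℝ (Fin m), X)) {δ c : ℝ}
    (hδ : ∀ p, ∃ i, Metric.ball p δ ⊆ σ ⁻¹' U i) (hc : c < δ)
    {v : Fin (n + 1) → stdSimplex ℝ (Fin m)} (hv : ∀ i, dist (v i) (v 0) ≤ c) :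
    realizeChain R σ (n + 1) (Finsupp.single v 1) ∈ smallChains R U (n + 1) := by
  rw [realizeChain_single]
  obtain ⟨i, hi⟩ := hδ (v 0)
  refine Finsupp.single_mem_supported _ _ ⟨i, ?_⟩
  rintro _ ⟨w, rfl⟩
  exact hi (Metric.mem_ball.2 ((dist_affineSimplex_le v w hv).trans_lt hc))

lemma exists_singularSd_pow_single_mem_smallChains (hU : ∀ i, IsOpen (U i))
    (hcover : ⋃ i, U i = Set.univ) (σ : C(stdSimplex ℝ (Fin (n + 1)), X)) :
    ∃ k, (singularSd R X (n + 1) ^ k) (Finsupp.single σ 1) ∈ smallChains R U (n + 1) := by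
  obtain ⟨δ, hδ, hball⟩ := lebesgue_number_lemma_of_metric (c := fun i => σ ⁻¹' U i) isCompact_univ
    (fun i => (hU i).preimage σ.continuous) (by rw [← Set.preimage_iUnion, hcover]; simp)
  have tendsto_diam : Filter.Tendsto (fun k => (((n + 1 - 1 : ℕ) : ℝ) / (n + 1 : ℕ)) ^ k *
      Metric.diam (Set.univ : Set (stdSimplex ℝ (Fin (n + 1))))) Filter.atTop (nhds 0) := by
    rw [← zero_mul]
    refine (tendsto_pow_atTop_nhds_zero_of_lt_one (by positivity) ?_).mul_const _
    rw [div_lt_one (by positivity), Nat.cast_lt]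
    exact n.lt_succ_self
  obtain ⟨k, hk⟩ := (tendsto_diam.eventually (gt_mem_nhds hδ)).exists
  refine ⟨k, ?_⟩
  rw [← realizeChain_vertexChain, ← LinearMap.comp_apply,
    Module.End.commute_pow_left_of_commute (singularSd_comp_realizeChain σ _), LinearMap.comp_apply]
  refine map_mem_of_mem_supported _ (fun v hv => ?_) (orderedSd_pow_single_mem_supported _
    Metric.diam_nonneg (fun _ _ => Metric.dist_le_diam_of_mem isCompact_univ.isBounded
      (Set.mem_univ _) (Set.mem_univ _)) k)
  exact realizeChain_single_mem_smallChains σ (fun p => hball p trivial) hk fun i => hv i 0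

lemma exists_singularSd_pow_mem_smallChains (hU : ∀ i, IsOpen (U i))
    (hcover : ⋃ i, U i = Set.univ) (x : SingularChain R X (n + 1)) :
    ∃ k, (singularSd R X (n + 1) ^ k) x ∈ smallChains R U (n + 1) := by
  induction x using Finsupp.induction_linear with
  | zero => exact ⟨0, Submodule.zero_mem _⟩
  | add x y hx hy =>
    obtain ⟨k, hk⟩ := hx
    obtain ⟨l, hl⟩ := hy
    refine ⟨l + k, ?_⟩
    rw [map_add]
    refine Submodule.add_mem _ ?_ ?_
    · rw [pow_add, Module.End.mul_apply]
      exact singularSd_pow_mem_smallChains hk l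
    · rw [add_comm l k, pow_add, Module.End.mul_apply]
      exact singularSd_pow_mem_smallChains hl k
  | single σ a =>
    obtain ⟨k, hk⟩ := exists_singularSd_pow_single_mem_smallChains (R := R) hU hcover σ
    refine ⟨k, ?_⟩
    rw [← mul_one a, ← smul_eq_mul, ← Finsupp.smul_single, map_smul]
    exact Submodule.smul_mem _ _ hk

lemma exists_sub_singularSd_pow_sub_singularBoundary_mem_smallChains
    {x : SingularChain R X (n + 1)} (hx : singularBoundary R X n x ∈ smallChains R U n) (k : ℕ) :
    ∃ e, x - (singularSd R X (n + 1) ^ k) x - singularBoundary R X (n + 1) e ∈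
      smallChains R U (n + 1) := by
  induction k with
  | zero => exact ⟨0, by simp⟩
  | succ k ih =>
    obtain ⟨e, he⟩ := ih
    set y := (singularSd R X (n + 1) ^ k) x with hy
    have boundary_mem : singularBoundary R X n y ∈ smallChains R U n := by
      have := LinearMap.congr_fun (Module.End.commute_pow_left_of_commute
        (singularBoundary_comp_singularSd (R := R) (X := X) n).symm k) x
      rw [hy, ← LinearMap.comp_apply, ← this]
      exact singularSd_pow_mem_smallChains hx k
    have boundary_homotopy :=
      LinearMap.congr_fun (singularBoundary_comp_singularSdHomotopy (R := R) (X := X) n) y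
    simp only [LinearMap.comp_apply, LinearMap.sub_apply, LinearMap.id_apply] at boundary_homotopy
    refine ⟨e + singularSdHomotopy R X (n + 1) y, ?_⟩
    rw [pow_succ', Module.End.mul_apply, ← hy, map_add, boundary_homotopy]
    convert Submodule.add_mem _ he (singularSdHomotopy_mem_smallChains boundary_mem) using 1
    abel

lemma exists_sub_singularBoundary_mem_smallChains (hU : ∀ i, IsOpen (U i))
    (hcover : ⋃ i, U i = Set.univ) {x : SingularChain R X (n + 1)}
    (hx : singularBoundary R X n x ∈ smallChains R U n) :
    ∃ e, x - singularBoundary R X (n + 1) e ∈ smallChains R U (n + 1) := by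
  obtain ⟨k, hk⟩ := exists_singularSd_pow_mem_smallChains hU hcover x
  obtain ⟨e, he⟩ := exists_sub_singularSd_pow_sub_singularBoundary_mem_smallChains hx k
  refine ⟨e, ?_⟩
  convert Submodule.add_mem _ he hk using 1
  abel

end SmallChains

section HomologyEulerChar

universe u v

variable {F : Type u} [Field F]

lemma finrank_eq_add_of_range_eq_ker {M N P : Type*} [AddCommGroup M] [Module F M]
    [AddCommGroup N] [Module F N] [AddCommGroup P] [Module F P] [Module.Finite F N]
    {f : M →ₗ[F] N} {g : N →ₗ[F] P} (h : LinearMap.range f = LinearMap.ker g) :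
    Module.finrank F N = Module.finrank F (LinearMap.range f) +
      Module.finrank F (LinearMap.range g) := by
  rw [h, add_comm, LinearMap.finrank_range_add_finrank_ker]

lemma finite_of_range_eq_ker {M N P : Type*} [AddCommGroup M] [Module F M]
    [AddCommGroup N] [Module F N] [AddCommGroup P] [Module F P] [Module.Finite F M]
    [Module.Finite F P] {f : M →ₗ[F] N} {g : N →ₗ[F] P}
    (h : LinearMap.range f = LinearMap.ker g) : Module.Finite F N :=
  have := isNoetherian_of_range_eq_ker f g h
  inferInstance

/-- The homology of `K` is finite-dimensional, vanishes in degrees `≥ D`, and has Euler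
characteristic `χ`. The first two conditions exclude the default values of `Module.finrank` and of
`HomologicalComplex.homologyEulerChar`. -/
structure HasEulerChar (K : ChainComplex (ModuleCat.{v} F) ℕ) (D : ℕ) (χ : ℤ) : Prop where
  finite : ∀ i, Module.Finite F (K.homology i)
  finrank_eq_zero : ∀ i, D ≤ i → Module.finrank F (K.homology i) = 0
  homologyEulerChar_eq : K.homologyEulerChar = χ

lemma homologyEulerChar_eq_sum_range {K : ChainComplex (ModuleCat.{v} F) ℕ} {D : ℕ}
    (h : ∀ i, D ≤ i → Module.finrank F (K.homology i) = 0) :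
    K.homologyEulerChar =
      ∑ i ∈ Finset.range D, (-1 : ℤ) ^ i * Module.finrank F (K.homology i) := by
  rw [HomologicalComplex.homologyEulerChar_eq_sum_finSet_of_finrankSupport_subset K
    (Finset.range D) ((GradedObject.finrankSupport_subset_iff _ _).2 fun i hi =>
      h i (by simpa using hi))]
  simp

namespace HasEulerChar

variable {K L : ChainComplex (ModuleCat.{v} F) ℕ} {D D' : ℕ} {χ : ℤ}

lemma mono (h : HasEulerChar K D χ) (hD : D ≤ D') : HasEulerChar K D' χ :=
  ⟨h.finite, fun i hi => h.finrank_eq_zero i (hD.trans hi), h.homologyEulerChar_eq⟩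

lemma sum_range_eq (h : HasEulerChar K D χ) :
    ∑ i ∈ Finset.range D, (-1 : ℤ) ^ i * Module.finrank F (K.homology i) = χ :=
  (homologyEulerChar_eq_sum_range h.finrank_eq_zero).symm.trans h.homologyEulerChar_eq

lemma of_homology_iso (h : HasEulerChar K D χ) (e : ∀ i, Nonempty (K.homology i ≅ L.homology i)) :
    HasEulerChar L D χ := by
  have hr : ∀ i, Module.finrank F (K.homology i) = Module.finrank F (L.homology i) := fun i =>
    (e i).some.toLinearEquiv.finrank_eq
  refine ⟨fun i => have := h.finite i; Module.Finite.equiv (e i).some.toLinearEquiv,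
    fun i hi => hr i ▸ h.finrank_eq_zero i hi, ?_⟩
  rw [← h.homologyEulerChar_eq]
  simp only [HomologicalComplex.homologyEulerChar, GradedObject.eulerChar, hr]

lemma of_iso (h : HasEulerChar K D χ) (e : K ≅ L) : HasEulerChar L D χ :=
  h.of_homology_iso fun i => ⟨(HomologicalComplex.homologyFunctor _ _ i).mapIso e⟩

lemma of_homotopyEquiv (h : HasEulerChar K D χ) (e : HomotopyEquiv K L) : HasEulerChar L D χ :=
  h.of_homology_iso fun i => ⟨e.toHomologyIso i⟩

lemma of_exactAt (h : ∀ i, K.ExactAt i) : HasEulerChar K 0 0 := by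
  have hsub : ∀ i, Subsingleton (K.homology i) := fun i =>
    ModuleCat.subsingleton_of_isZero (h i).isZero_homology
  have hrank : ∀ i, 0 ≤ i → Module.finrank F (K.homology i) = 0 := fun i _ =>
    Module.finrank_zero_of_subsingleton
  exact ⟨fun i => inferInstance, hrank, by simp [homologyEulerChar_eq_sum_range hrank]⟩

end HasEulerChar

section LongExactSequence

variable {S : ShortComplex (ChainComplex (ModuleCat.{v} F) ℕ)}
  {a b c : ℕ} {α β γ : ℤ}

lemma surjective_homologyMap_g_zero (hS : S.ShortExact) :
    Function.Surjective (HomologicalComplex.homologyMap S.g 0).hom := by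
  have := hS.epi_g
  refine (ModuleCat.epi_iff_surjective _).1 ?_
  exact HomologicalComplex.epi_homologyMap_of_epi_of_not_rel _ _ (by simp)

lemma finite_homology_X₂ (hS : S.ShortExact) (h₁ : ∀ i, Module.Finite F (S.X₁.homology i))
    (h₃ : ∀ i, Module.Finite F (S.X₃.homology i)) (i : ℕ) :
    Module.Finite F (S.X₂.homology i) :=
  have := h₁ i
  have := h₃ i
  finite_of_range_eq_ker (hS.homology_exact₂ i).moduleCat_range_eq_ker

lemma finite_homology_X₃ (hS : S.ShortExact) (h₁ : ∀ i, Module.Finite F (S.X₁.homology i))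
    (h₂ : ∀ i, Module.Finite F (S.X₂.homology i)) :
    ∀ i, Module.Finite F (S.X₃.homology i)
  | 0 =>
    have := h₂ 0
    Module.Finite.of_surjective _ (surjective_homologyMap_g_zero hS)
  | i + 1 =>
    have := h₁ i
    have := h₂ (i + 1)
    finite_of_range_eq_ker (hS.homology_exact₃ (i + 1) i rfl).moduleCat_range_eq_ker

lemma finrank_homology_X₂_le (hS : S.ShortExact) (i : ℕ) [Module.Finite F (S.X₁.homology i)]
    [Module.Finite F (S.X₂.homology i)] [Module.Finite F (S.X₃.homology i)] :
    Module.finrank F (S.X₂.homology i) ≤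
      Module.finrank F (S.X₁.homology i) + Module.finrank F (S.X₃.homology i) := by
  rw [finrank_eq_add_of_range_eq_ker (hS.homology_exact₂ i).moduleCat_range_eq_ker]
  exact add_le_add (LinearMap.finrank_range_le _) (Submodule.finrank_le _)

lemma finrank_homology_X₃_succ_le (hS : S.ShortExact) (i : ℕ)
    [Module.Finite F (S.X₂.homology (i + 1))]
    [Module.Finite F (S.X₃.homology (i + 1))] [Module.Finite F (S.X₁.homology i)] :
    Module.finrank F (S.X₃.homology (i + 1)) ≤
      Module.finrank F (S.X₂.homology (i + 1)) + Module.finrank F (S.X₁.homology i) := by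
  rw [finrank_eq_add_of_range_eq_ker
    (hS.homology_exact₃ (i + 1) i rfl).moduleCat_range_eq_ker]
  exact add_le_add (LinearMap.finrank_range_le _) (Submodule.finrank_le _)

lemma sum_range_finrank_homology_X₂_add (hS : S.ShortExact)
    (h₁ : ∀ i, Module.Finite F (S.X₁.homology i))
    (h₂ : ∀ i, Module.Finite F (S.X₂.homology i)) (h₃ : ∀ i, Module.Finite F (S.X₃.homology i))
    (N : ℕ) :
    ∑ i ∈ Finset.range (N + 1), (-1 : ℤ) ^ i * Module.finrank F (S.X₂.homology i) +
        (-1) ^ N * Module.finrank F (LinearMap.range (hS.δ (N + 1) N rfl).hom) =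
      ∑ i ∈ Finset.range (N + 1), (-1 : ℤ) ^ i * Module.finrank F (S.X₁.homology i) +
        ∑ i ∈ Finset.range (N + 1), (-1 : ℤ) ^ i * Module.finrank F (S.X₃.homology i) := by
  have e₁ := fun i => finrank_eq_add_of_range_eq_ker
    (hS.homology_exact₁ (i + 1) i rfl).moduleCat_range_eq_ker
  have e₂ := fun i => finrank_eq_add_of_range_eq_ker
    (hS.homology_exact₂ i).moduleCat_range_eq_ker
  have e₃ := fun i => finrank_eq_add_of_range_eq_ker
    (hS.homology_exact₃ (i + 1) i rfl).moduleCat_range_eq_ker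
  dsimp only at e₁ e₂ e₃
  induction N with
  | zero =>
    have e₀ := finrank_top F (S.X₃.homology 0)
    rw [← LinearMap.range_eq_top.2 (surjective_homologyMap_g_zero hS)] at e₀
    simp only [zero_add, Finset.sum_range_one, pow_zero, one_mul]
    have := e₁ 0
    have := e₂ 0
    omega
  | succ N ih =>
    simp only [Finset.sum_range_succ _ (N + 1), e₁ (N + 1), e₂ (N + 1), e₃ N]
    push_cast
    linear_combination ih

lemma homologyEulerChar_X₂ (hS : S.ShortExact) (h₁ : HasEulerChar S.X₁ a α)
    (h₂ : ∀ i, Module.Finite F (S.X₂.homology i)) (h₃ : HasEulerChar S.X₃ c γ)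
    (hb : ∀ i, b ≤ i → Module.finrank F (S.X₂.homology i) = 0) :
    S.X₂.homologyEulerChar = α + γ := by
  have hδ : Module.finrank F (LinearMap.range (hS.δ (a + b + c + 1) (a + b + c) rfl).hom) = 0 := by
    have := h₁.finite (a + b + c)
    exact Nat.eq_zero_of_le_zero
      ((Submodule.finrank_le _).trans_eq (h₁.finrank_eq_zero _ (by omega)))
  have hsum := sum_range_finrank_homology_X₂_add hS h₁.finite h₂ h₃.finite (a + b + c)
  rw [hδ, (h₁.mono (D' := a + b + c + 1) (by omega)).sum_range_eq,
    (h₃.mono (D' := a + b + c + 1) (by omega)).sum_range_eq] at hsum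
  rw [homologyEulerChar_eq_sum_range (D := a + b + c + 1) fun i hi => hb i (by omega)]
  simpa using hsum

lemma HasEulerChar.shortExact_X₂ (hS : S.ShortExact)
    (h₁ : HasEulerChar S.X₁ a α) (h₃ : HasEulerChar S.X₃ c γ) :
    HasEulerChar S.X₂ (max a c) (α + γ) := by
  have hfin := finite_homology_X₂ hS h₁.finite h₃.finite
  have hzero : ∀ i, max a c ≤ i → Module.finrank F (S.X₂.homology i) = 0 := fun i hi => by
    have := h₁.finite i
    have := h₃.finite i
    have := h₁.finrank_eq_zero i (by omega)
    have := h₃.finrank_eq_zero i (by omega)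
    have := finrank_homology_X₂_le hS i
    omega
  exact ⟨hfin, hzero, homologyEulerChar_X₂ hS h₁ hfin h₃ hzero⟩

lemma HasEulerChar.shortExact_X₃ (hS : S.ShortExact)
    (h₁ : HasEulerChar S.X₁ a α) (h₂ : HasEulerChar S.X₂ b β) :
    HasEulerChar S.X₃ (max (a + 1) b) (β - α) := by
  have hfin := finite_homology_X₃ hS h₁.finite h₂.finite
  have hzero : ∀ i, max (a + 1) b ≤ i → Module.finrank F (S.X₃.homology i) = 0
    | 0, hi => by omega
    | i + 1, hi => by
      have := h₁.finite i
      have := h₂.finrank_eq_zero (i + 1) (by omega)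
      have := h₁.finrank_eq_zero i (by omega)
      have := h₂.finite (i + 1)
      have := finrank_homology_X₃_succ_le hS i
      omega
  have h₃ : HasEulerChar S.X₃ _ S.X₃.homologyEulerChar := ⟨hfin, hzero, rfl⟩
  have hsum := homologyEulerChar_X₂ hS h₁ h₂.finite h₃ h₂.finrank_eq_zero
  rw [h₂.homologyEulerChar_eq] at hsum
  exact ⟨hfin, hzero, by linarith⟩

end LongExactSequence

end HomologyEulerChar

section Subcomplexes

universe u v

variable {R : Type u} [Ring R] {ι : Type*} {c : ComplexShape ι}
  (K L : HomologicalComplex (ModuleCat.{v} R) c)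

/-- The degreewise product of two complexes of modules, with the explicit product modules as
terms. -/
noncomputable def prodComplex : HomologicalComplex (ModuleCat.{v} R) c where
  X i := ModuleCat.of R (K.X i × L.X i)
  d i j := ModuleCat.ofHom ((K.d i j).hom.prodMap (L.d i j).hom)
  shape i j h := by
    rw [K.shape i j h, L.shape i j h]
    rfl
  d_comp_d' i j k _ _ := by
    ext x <;> simp [← ModuleCat.comp_apply]

lemma shortExact_of_function_exact {S : ShortComplex (HomologicalComplex (ModuleCat.{v} R) c)}
    (hf : ∀ i, Function.Injective (S.f.f i).hom) (hg : ∀ i, Function.Surjective (S.g.f i).hom)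
    (hfg : ∀ i x, (S.g.f i).hom x = 0 → ∃ y, (S.f.f i).hom y = x) : S.ShortExact := by
  refine HomologicalComplex.shortExact_of_degreewise_shortExact _ fun i => ?_
  have : Mono (S.map (HomologicalComplex.eval _ _ i)).f :=
    (ModuleCat.mono_iff_injective _).2 (hf i)
  have : Epi (S.map (HomologicalComplex.eval _ _ i)).g :=
    (ModuleCat.epi_iff_surjective _).2 (hg i)
  exact ⟨(ShortComplex.moduleCat_exact_iff _).2 (hfg i)⟩

/-- The split short complex `K ⟶ K × L ⟶ L`. -/
noncomputable def prodShortComplex : ShortComplex (HomologicalComplex (ModuleCat.{v} R) c) where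
  X₁ := K
  X₂ := prodComplex K L
  X₃ := L
  f :=
    { f := fun i => ModuleCat.ofHom (LinearMap.inl R (K.X i) (L.X i))
      comm' := fun i j _ => ModuleCat.hom_ext (LinearMap.ext fun x =>
        Prod.ext rfl (map_zero (L.d i j).hom)) }
  g := { f := fun i => ModuleCat.ofHom (LinearMap.snd R (K.X i) (L.X i)) }

lemma shortExact_prodShortComplex : (prodShortComplex K L).ShortExact :=
  shortExact_of_function_exact (fun _ _ _ h => congr_arg Prod.fst h) (fun _ y => ⟨(0, y), rfl⟩)
    fun _ x hx => ⟨x.1, Prod.ext rfl hx.symm⟩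

variable {P Q : ∀ i, Submodule R (K.X i)}

/-- The subcomplex given by a family of submodules stable under the differential. -/
noncomputable def subComplex (P : ∀ i, Submodule R (K.X i))
    (hP : ∀ i j, ∀ x ∈ P i, (K.d i j).hom x ∈ P j) : HomologicalComplex (ModuleCat.{v} R) c where
  X i := ModuleCat.of R (P i)
  d i j := ModuleCat.ofHom ((K.d i j).hom.restrict (hP i j))
  shape i j h := by
    ext x
    simp [K.shape i j h]
  d_comp_d' i j k _ _ := by
    ext x
    simp [← ModuleCat.comp_apply]

/-- The quotient of a complex by the subcomplex given by a family of submodules stable under the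
differential. -/
noncomputable def quotientComplex (P : ∀ i, Submodule R (K.X i))
    (hP : ∀ i j, ∀ x ∈ P i, (K.d i j).hom x ∈ P j) : HomologicalComplex (ModuleCat.{v} R) c where
  X i := ModuleCat.of R (K.X i ⧸ P i)
  d i j := ModuleCat.ofHom ((P i).mapQ (P j) (K.d i j).hom (hP i j))
  shape i j h := by
    ext x
    simp [K.shape i j h]
  d_comp_d' i j k _ _ := by
    ext x
    simp [← ModuleCat.comp_apply]

/-- The short complex `P ⟶ K ⟶ K / P` of a subcomplex. -/
noncomputable def subShortComplex (hP : ∀ i j, ∀ x ∈ P i, (K.d i j).hom x ∈ P j) :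
    ShortComplex (HomologicalComplex (ModuleCat.{v} R) c) where
  X₁ := subComplex K P hP
  X₂ := K
  X₃ := quotientComplex K P hP
  f := { f := fun i => ModuleCat.ofHom (P i).subtype }
  g := { f := fun i => ModuleCat.ofHom (P i).mkQ }
  zero := HomologicalComplex.hom_ext _ _ fun i => ModuleCat.hom_ext (LinearMap.ext fun x =>
    (Submodule.Quotient.mk_eq_zero _).2 x.2)

lemma shortExact_subShortComplex (hP : ∀ i j, ∀ x ∈ P i, (K.d i j).hom x ∈ P j) :
    (subShortComplex K hP).ShortExact :=
  shortExact_of_function_exact (fun _ => Subtype.val_injective)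
    (fun _ => Submodule.mkQ_surjective _)
    fun _ x hx => ⟨⟨x, (Submodule.Quotient.mk_eq_zero _).1 hx⟩, rfl⟩

/-- The Mayer–Vietoris short complex `P ⊓ Q ⟶ P × Q ⟶ P ⊔ Q` of two subcomplexes. -/
noncomputable def supShortComplex (hP : ∀ i j, ∀ x ∈ P i, (K.d i j).hom x ∈ P j)
    (hQ : ∀ i j, ∀ x ∈ Q i, (K.d i j).hom x ∈ Q j)
    (hinf : ∀ i j, ∀ x ∈ P i ⊓ Q i, (K.d i j).hom x ∈ P j ⊓ Q j)
    (hsup : ∀ i j, ∀ x ∈ P i ⊔ Q i, (K.d i j).hom x ∈ P j ⊔ Q j) :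
    ShortComplex (HomologicalComplex (ModuleCat.{v} R) c) where
  X₁ := subComplex K (fun i => P i ⊓ Q i) hinf
  X₂ := prodComplex (subComplex K P hP) (subComplex K Q hQ)
  X₃ := subComplex K (fun i => P i ⊔ Q i) hsup
  f :=
    { f := fun _ => ModuleCat.ofHom ((Submodule.inclusion inf_le_left).prod
        (-Submodule.inclusion inf_le_right))
      comm' := fun i j _ => ModuleCat.hom_ext (LinearMap.ext fun x =>
        Prod.ext rfl (Subtype.ext (map_neg (K.d i j).hom x.1))) }
  g :=
    { f := fun _ => ModuleCat.ofHom ((Submodule.inclusion le_sup_left).coprod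
        (Submodule.inclusion le_sup_right))
      comm' := fun i j _ => ModuleCat.hom_ext (LinearMap.ext fun x =>
        Subtype.ext (map_add (K.d i j).hom x.1.1 x.2.1)) }
  zero := HomologicalComplex.hom_ext _ _ fun _ => ModuleCat.hom_ext (LinearMap.ext fun x =>
    Subtype.ext (add_neg_cancel x.1))

lemma shortExact_supShortComplex (hP : ∀ i j, ∀ x ∈ P i, (K.d i j).hom x ∈ P j)
    (hQ : ∀ i j, ∀ x ∈ Q i, (K.d i j).hom x ∈ Q j)
    (hinf : ∀ i j, ∀ x ∈ P i ⊓ Q i, (K.d i j).hom x ∈ P j ⊓ Q j)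
    (hsup : ∀ i j, ∀ x ∈ P i ⊔ Q i, (K.d i j).hom x ∈ P j ⊔ Q j) :
    (supShortComplex K hP hQ hinf hsup).ShortExact := by
  refine shortExact_of_function_exact (fun i x y h => ?_) (fun _ x => ?_) fun _ x hx => ?_
  · exact Subtype.ext (congr_arg (fun z : P i × Q i => (z.1 : K.X i)) h)
  · obtain ⟨p, hp, q, hq, h⟩ := Submodule.mem_sup.1 x.2
    exact ⟨(⟨p, hp⟩, ⟨q, hq⟩), Subtype.ext h⟩
  · obtain ⟨⟨p, hp⟩, ⟨q, hq⟩⟩ := x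
    have h : p + q = 0 := congr_arg Subtype.val hx
    obtain rfl := eq_neg_of_add_eq_zero_right h
    exact ⟨⟨p, hp, by simpa using hq⟩, rfl⟩

namespace HasEulerChar

variable {F : Type u} [Field F] {K L : ChainComplex (ModuleCat.{v} F) ℕ}
  {P Q : ∀ i, Submodule F (K.X i)} {a b c : ℕ} {α β γ : ℤ}

lemma prodComplex (hK : HasEulerChar K a α) (hL : HasEulerChar L b β) :
    HasEulerChar (prodComplex K L) (max a b) (α + β) :=
  shortExact_X₂ (shortExact_prodShortComplex K L) hK hL

lemma of_subComplex {hP : ∀ i j, ∀ x ∈ P i, (K.d i j).hom x ∈ P j}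
    (h : HasEulerChar (subComplex K P hP) a α)
    (hex : ∀ i x, (K.d i ((ComplexShape.down ℕ).next i)).hom x ∈ P _ →
      ∃ e, x - (K.d (i + 1) i).hom e ∈ P i) : HasEulerChar K a α := by
  have hquot : HasEulerChar (quotientComplex K P hP) 0 0 := by
    refine of_exactAt fun i => ?_
    rw [HomologicalComplex.exactAt_iff' _ (i + 1) i _ (by simp) rfl,
      ShortComplex.moduleCat_exact_iff]
    intro x hx
    obtain ⟨x, rfl⟩ := Submodule.mkQ_surjective _ x
    obtain ⟨e, he⟩ := hex i x ((Submodule.Quotient.mk_eq_zero _).1 hx)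
    exact ⟨Submodule.Quotient.mk e, ((Submodule.Quotient.eq _).2 he).symm⟩
  have hK := shortExact_X₂ (shortExact_subShortComplex K hP) h hquot
  rwa [Nat.max_zero, add_zero] at hK

lemma subComplex_sup {hP : ∀ i j, ∀ x ∈ P i, (K.d i j).hom x ∈ P j}
    {hQ : ∀ i j, ∀ x ∈ Q i, (K.d i j).hom x ∈ Q j}
    {hinf : ∀ i j, ∀ x ∈ P i ⊓ Q i, (K.d i j).hom x ∈ P j ⊓ Q j}
    (hsup : ∀ i j, ∀ x ∈ P i ⊔ Q i, (K.d i j).hom x ∈ P j ⊔ Q j)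
    (h₁ : HasEulerChar (subComplex K P hP) a α) (h₂ : HasEulerChar (subComplex K Q hQ) b β)
    (h₃ : HasEulerChar (subComplex K (fun i => P i ⊓ Q i) hinf) c γ) :
    HasEulerChar (subComplex K (fun i => P i ⊔ Q i) hsup)
      (max (c + 1) (max a b)) (α + β - γ) :=
  shortExact_X₃ (shortExact_supShortComplex K hP hQ hinf hsup) h₃ (h₁.prodComplex h₂)

end HasEulerChar

end Subcomplexes

section MayerVietoris

universe u

/-- The singular chain complex of a space, with explicit modules of singular chains as terms. -/
noncomputable def singularComplex (R : Type u) [CommRing R] (X : Type u) [TopologicalSpace X] :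
    ChainComplex (ModuleCat.{u} R) ℕ :=
  ChainComplex.of (fun n => ModuleCat.of R (SingularChain R X (n + 1)))
    (fun n => ModuleCat.ofHom (singularBoundary R X (n + 1)))
    fun n => ModuleCat.hom_ext (singularBoundary_comp_singularBoundary (n + 1))

variable {R : Type u} [CommRing R] {X Y : Type u} [TopologicalSpace X] [TopologicalSpace Y]

lemma singularComplex_d (n : ℕ) :
    (singularComplex R X).d (n + 1) n = ModuleCat.ofHom (singularBoundary R X (n + 1)) :=
  ChainComplex.of_d (fun n => ModuleCat.of R (SingularChain R X (n + 1)))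
    (fun n => ModuleCat.ofHom (singularBoundary R X (n + 1))) n

lemma singularComplex_d_mem {P : ∀ n, Submodule R (SingularChain R X (n + 1))}
    (hP : ∀ n, ∀ x ∈ P (n + 1), singularBoundary R X (n + 1) x ∈ P n) (i j : ℕ) :
    ∀ x ∈ P i, ((singularComplex R X).d i j).hom x ∈ P j := by
  intro x hx
  by_cases h : j + 1 = i
  · subst h
    rw [singularComplex_d]
    exact hP j x hx
  · rw [(singularComplex R X).shape i j h]
    exact Submodule.zero_mem _

/-- The singular chains whose simplices all lie in `U`. -/
def chainsIn (R : Type*) [CommRing R] {X : Type*} [TopologicalSpace X] (U : Set X) (n : ℕ) :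
    Submodule R (SingularChain R X n) :=
  Finsupp.supported R R {σ | Set.range σ ⊆ U}

lemma iSup_chainsIn {ι : Type*} (U : ι → Set X) (n : ℕ) :
    ⨆ i, chainsIn R (U i) n = smallChains R U n := by
  rw [smallChains, Set.ofPred_exists, Finsupp.supported_iUnion]
  rfl

lemma chainsIn_sup (U V : Set X) (n : ℕ) :
    chainsIn R U n ⊔ chainsIn R V n = smallChains R (fun b : Bool => cond b U V) n := by
  rw [← iSup_chainsIn, iSup_bool_eq]
  rfl

lemma chainsIn_inf (U V : Set X) (n : ℕ) :
    chainsIn R U n ⊓ chainsIn R V n = chainsIn R (U ∩ V) n := by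
  simp only [chainsIn, Set.subset_inter_iff, ← Finsupp.supported_inter]
  rfl

lemma singularBoundary_mem_chainsIn {U : Set X} (n : ℕ) :
    ∀ x ∈ chainsIn R U (n + 1), singularBoundary R X n x ∈ chainsIn R U n := by
  intro x hx
  rw [← iSup_const (ι := Unit) (a := chainsIn R U _), iSup_chainsIn] at hx ⊢
  exact singularBoundary_mem_smallChains hx

/-- The complex of singular chains in `U`, as a subcomplex of the singular chain complex of the
ambient space. -/
noncomputable abbrev complexIn (R : Type u) [CommRing R] (U : Set X) :
    ChainComplex (ModuleCat.{u} R) ℕ :=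
  subComplex (singularComplex R X) (fun i => chainsIn R U (i + 1))
    (singularComplex_d_mem fun n => singularBoundary_mem_chainsIn (n + 1))

lemma singularBoundary_comp_lmapDomain (f : C(X, Y)) (n : ℕ) :
    singularBoundary R Y n ∘ₗ Finsupp.lmapDomain R R f.comp =
      Finsupp.lmapDomain R R f.comp ∘ₗ singularBoundary R X n :=
  linearMap_ext_single_one fun σ => by
    simp [singularBoundary_single, ContinuousMap.comp_assoc]

lemma range_lmapDomain_comp {f : C(X, Y)} (hf : Topology.IsEmbedding f) (n : ℕ) :
    LinearMap.range (Finsupp.lmapDomain R R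
        (f.comp : C(stdSimplex ℝ (Fin n), X) → C(stdSimplex ℝ (Fin n), Y))) =
      chainsIn R (Set.range f) n := by
  rw [LinearMap.range_eq_map, ← Finsupp.supported_univ, Finsupp.lmapDomain_supported,
    Set.image_univ, chainsIn]
  congr 1
  refine Set.Subset.antisymm ?_ fun σ hσ => ?_
  · rintro _ ⟨σ, rfl⟩
    exact Set.range_comp_subset_range σ f
  · choose g hg using fun w => hσ ⟨w, rfl⟩
    have hg' : f ∘ g = σ := funext hg
    exact ⟨⟨g, hf.continuous_iff.2 (hg' ▸ σ.continuous)⟩, ContinuousMap.ext hg⟩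

/-- An embedding identifies singular chains with the singular chains in its range. -/
noncomputable def chainsInRangeEquiv (R : Type u) [CommRing R] {f : C(X, Y)}
    (hf : Topology.IsEmbedding f) (n : ℕ) :
    SingularChain R X n ≃ₗ[R] chainsIn R (Set.range f) n :=
  (LinearEquiv.ofInjective (Finsupp.lmapDomain R R f.comp)
    (Finsupp.mapDomain_injective fun _ _ h => ContinuousMap.ext fun w =>
      hf.injective (DFunLike.congr_fun h w))).trans
    (LinearEquiv.ofEq _ _ (range_lmapDomain_comp hf n))

/-- An embedding identifies the singular complex with the complex of chains in its range. -/
noncomputable def complexInRangeIso (R : Type u) [CommRing R] {f : C(X, Y)}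
    (hf : Topology.IsEmbedding f) : singularComplex R X ≅ complexIn R (Set.range f) :=
  HomologicalComplex.Hom.isoOfComponents
    (fun i => (chainsInRangeEquiv R hf (i + 1)).toModuleIso) <| by
      rintro _ j rfl
      refine ModuleCat.hom_ext (LinearMap.ext fun x => Subtype.ext ?_)
      change ((singularComplex R Y).d (j + 1) j).hom (Finsupp.lmapDomain R R f.comp x) =
        Finsupp.lmapDomain R R f.comp (((singularComplex R X).d (j + 1) j).hom x)
      rw [singularComplex_d, singularComplex_d]
      exact LinearMap.congr_fun (singularBoundary_comp_lmapDomain f (j + 1)) x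

namespace HasEulerChar

variable {F : Type u} [Field F] {a : ℕ} {α : ℤ}

lemma of_complexIn_univ (h : HasEulerChar (complexIn F (Set.univ : Set X)) a α) :
    HasEulerChar (singularComplex F X) a α :=
  h.of_subComplex fun i x _ => ⟨0, by
    rw [map_zero, sub_zero]
    exact fun _ _ => Set.subset_univ _⟩

lemma of_homeomorph (h : HasEulerChar (singularComplex F X) a α) (e : X ≃ₜ Y) :
    HasEulerChar (singularComplex F Y) a α := by
  have := h.of_iso (complexInRangeIso F (f := (e : C(X, Y))) e.isEmbedding)
  simp only [ContinuousMap.coe_coe, e.range_coe] at this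
  exact this.of_complexIn_univ

lemma complexIn {U : Set X} (h : HasEulerChar (singularComplex F U) a α) :
    HasEulerChar (complexIn F U) a α := by
  have := h.of_iso (complexInRangeIso F (f := ⟨Subtype.val, continuous_subtype_val⟩)
    Topology.IsEmbedding.subtypeVal)
  simpa only [ContinuousMap.coe_mk, Subtype.range_coe] using this

end HasEulerChar

lemma smallChains_zero {ι : Sort*} [Nonempty ι] (U : ι → Set X) : smallChains R U 0 = ⊤ := by
  have : IsEmpty (stdSimplex ℝ (Fin 0)) := ⟨fun w => by simpa using stdSimplex.sum_eq_one w⟩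
  simp [smallChains, Set.range_eq_empty]

lemma exists_sub_singularComplex_d_mem_smallChains {ι : Sort*} [Nonempty ι] {U : ι → Set X}
    (hU : ∀ i, IsOpen (U i)) (hcover : ⋃ i, U i = Set.univ) (n : ℕ)
    (x : (singularComplex R X).X n)
    (hx : ((singularComplex R X).d n ((ComplexShape.down ℕ).next n)).hom x ∈
      smallChains R U ((ComplexShape.down ℕ).next n + 1)) :
    ∃ e, x - ((singularComplex R X).d (n + 1) n).hom e ∈ smallChains R U (n + 1) := by
  rw [singularComplex_d]
  refine exists_sub_singularBoundary_mem_smallChains hU hcover ?_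
  rcases n with _ | n
  · rw [smallChains_zero]
    exact Submodule.mem_top
  · rwa [ChainComplex.next_nat_succ, singularComplex_d] at hx

namespace HasEulerChar

variable {F : Type u} [Field F] {a b c : ℕ} {α β γ : ℤ}

lemma mayerVietoris {U V : Set X} (hU : IsOpen U) (hV : IsOpen V) (hUV : U ∪ V = Set.univ)
    (h₁ : HasEulerChar (singularComplex F U) a α) (h₂ : HasEulerChar (singularComplex F V) b β)
    (h₃ : HasEulerChar (singularComplex F ↥(U ∩ V)) c γ) :
    HasEulerChar (singularComplex F X) (max (c + 1) (max a b)) (α + β - γ) := by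
  have hsup : ∀ i, (chainsIn F U (i + 1) ⊔ chainsIn F V (i + 1) :
      Submodule F ((singularComplex F X).X i)) = smallChains F (fun b => cond b U V) (i + 1) :=
    fun i => chainsIn_sup _ _ _
  have hstable : ∀ i j, ∀ x ∈ (chainsIn F U (i + 1) ⊔ chainsIn F V (i + 1) :
      Submodule F ((singularComplex F X).X i)), ((singularComplex F X).d i j).hom x ∈
      (chainsIn F U (j + 1) ⊔ chainsIn F V (j + 1) : Submodule F ((singularComplex F X).X j)) := by
    simp only [hsup]
    exact singularComplex_d_mem fun n x hx => singularBoundary_mem_smallChains hx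
  have hinf := h₃.complexIn
  simp only [_root_.complexIn, ← chainsIn_inf] at hinf
  refine (subComplex_sup hstable h₁.complexIn h₂.complexIn hinf).of_subComplex fun n x hx => ?_
  simp only [hsup] at hx ⊢
  refine exists_sub_singularComplex_d_mem_smallChains (Bool.rec hV hU) ?_ n x hx
  rw [← hUV, Set.union_eq_iUnion]

end HasEulerChar

end MayerVietoris

section Contractible

universe u

variable (R : Type u) [CommRing R]

/-- The singular chain complex as a functor. -/
noncomputable def singularChainFunctor : TopCat.{u} ⥤ ChainComplex (ModuleCat.{u} R) ℕ :=
  TopCat.toSSet ⋙ (SimplicialObject.whiskering _ _).obj (ModuleCat.free R) ⋙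
    AlgebraicTopology.alternatingFaceMapComplex (ModuleCat R)

/-- Homotopic maps induce chain homotopic maps. -/
noncomputable def singularChainHomotopy {X Y : TopCat.{u}} {f g : X ⟶ Y}
    (H : TopCat.Homotopy f g) :
    Homotopy ((singularChainFunctor R).map f) ((singularChainFunctor R).map g) :=
  (H.toSSet.toSimplicialObjectHomotopy.whiskerRight (ModuleCat.free R)).toChainHomotopy

/-- Homotopy equivalent spaces have homotopy equivalent singular chain complexes. -/
noncomputable def singularChainHomotopyEquiv {X Y : Type u} [TopologicalSpace X]
    [TopologicalSpace Y] (e : ContinuousMap.HomotopyEquiv X Y) :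
    HomotopyEquiv ((singularChainFunctor R).obj (TopCat.of X))
      ((singularChainFunctor R).obj (TopCat.of Y)) where
  hom := (singularChainFunctor R).map (TopCat.ofHom e.toFun)
  inv := (singularChainFunctor R).map (TopCat.ofHom e.invFun)
  homotopyHomInvId := (Homotopy.ofEq ((singularChainFunctor R).map_comp _ _).symm).trans
    ((singularChainHomotopy R (f := TopCat.ofHom e.toFun ≫ TopCat.ofHom e.invFun) (g := 𝟙 _)
      e.left_inv.some).trans (Homotopy.ofEq ((singularChainFunctor R).map_id _)))
  homotopyInvHomId := (Homotopy.ofEq ((singularChainFunctor R).map_comp _ _).symm).trans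
    ((singularChainHomotopy R (f := TopCat.ofHom e.invFun ≫ TopCat.ofHom e.toFun) (g := 𝟙 _)
      e.right_inv.some).trans (Homotopy.ofEq ((singularChainFunctor R).map_id _)))

open AlgebraicTopology in
lemma alternatingFaceMapComplex_free_d_single (S : SSet.{u}) (n : ℕ)
    (σ : S.obj (Opposite.op (SimplexCategory.mk (n + 1)))) :
    (((alternatingFaceMapComplex (ModuleCat R)).obj (S ⋙ ModuleCat.free R)).d (n + 1) n).hom
        (Finsupp.single σ (1 : R)) =
      (∑ i : Fin (n + 2), (-1 : ℤ) ^ (i : ℕ) • Finsupp.single (S.δ i σ) (1 : R) :) := by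
  rw [alternatingFaceMapComplex_obj_d, AlternatingFaceMapComplex.objD, ModuleCat.hom_sum]
  refine (LinearMap.sum_apply _ _ _).trans (Finset.sum_congr rfl fun i _ => ?_)
  exact congr_arg ((-1 : ℤ) ^ (i : ℕ) • ·)
    (Finsupp.mapDomain_single (f := S.δ i) (a := σ) (b := (1 : R)))

/-- The two models of the singular chain complex agree. -/
noncomputable def singularChainFunctorObjIso (X : Type u) [TopologicalSpace X] :
    (singularChainFunctor R).obj (TopCat.of X) ≅ singularComplex R X :=
  HomologicalComplex.Hom.isoOfComponents
    (fun i => (Finsupp.domLCongr (TopCat.toSSetObjEquiv (TopCat.of X)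
      (Opposite.op (SimplexCategory.mk i)))).toModuleIso) <| by
      rintro _ j rfl
      rw [singularComplex_d]
      refine ModuleCat.hom_ext (linearMap_ext_single_one fun σ => ?_)
      refine (congr_arg (singularBoundary R X (j + 1)) (Finsupp.domLCongr_single _ _ _)).trans ?_
      refine Eq.trans ?_ (congr_arg (Finsupp.domLCongr (M := R) (R := R)
        (TopCat.toSSetObjEquiv (TopCat.of X) (Opposite.op (SimplexCategory.mk j))))
        (alternatingFaceMapComplex_free_d_single R _ j σ).symm)
      rw [singularBoundary_single, map_sum]
      refine Finset.sum_congr rfl fun i _ => ?_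
      rw [map_zsmul, Finsupp.domLCongr_single, ← Int.cast_smul_eq_zsmul R]
      push_cast
      rfl

namespace HasEulerChar

variable {F : Type u} [Field F]

lemma alternatingConst (M : ModuleCat.{u} F) [Module.Finite F M] :
    HasEulerChar (ChainComplex.alternatingConst.obj M) 1 (Module.finrank F M) := by
  have e := (ChainComplex.alternatingConstHomologyZero M).toLinearEquiv
  have hsub : ∀ i, 1 ≤ i → Subsingleton ((ChainComplex.alternatingConst.obj M).homology i) :=
    fun i hi => ModuleCat.subsingleton_of_isZero
      (ChainComplex.alternatingConst_exactAt _ i (by omega)).isZero_homology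
  have hrank : ∀ i, 1 ≤ i →
      Module.finrank F ((ChainComplex.alternatingConst.obj M).homology i) = 0 := fun i hi =>
    have := hsub i hi
    Module.finrank_zero_of_subsingleton
  refine ⟨fun i => ?_, hrank, ?_⟩
  · rcases i with _ | i
    · exact Module.Finite.equiv e.symm
    · have := hsub (i + 1) (by omega)
      infer_instance
  · rw [homologyEulerChar_eq_sum_range hrank, Finset.sum_range_one, e.finrank_eq, pow_zero,
      one_mul]

variable (F) in
lemma of_contractibleSpace (X : Type u) [TopologicalSpace X] [ContractibleSpace X] :
    HasEulerChar (singularComplex F X) 1 1 := by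
  let e : (singularChainFunctor F).obj (TopCat.of PUnit) ≅
      ChainComplex.alternatingConst.obj ((ModuleCat.free F).obj PUnit) :=
    (AlgebraicTopology.alternatingFaceMapComplex _).mapIso
      (((SimplicialObject.whiskering _ _).obj (ModuleCat.free F)).mapIso
        (TopCat.toSSetIsoConst (TopCat.of PUnit)) ≪≫ Functor.constComp _ _ _) ≪≫
      AlgebraicTopology.alternatingFaceMapComplexConst.app _
  have : Module.Finite F ((ModuleCat.free F).obj PUnit) :=
    inferInstanceAs (Module.Finite F (PUnit →₀ F))
  have hrank : Module.finrank F ((ModuleCat.free F).obj PUnit) = 1 :=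
    (Module.finrank_finsupp_self F).trans Fintype.card_punit
  have hpoint := (alternatingConst ((ModuleCat.free F).obj PUnit)).of_iso e.symm
  rw [hrank] at hpoint
  have hequiv : ContinuousMap.HomotopyEquiv PUnit.{u + 1} X :=
    (Homeomorph.homeomorphOfUnique PUnit Unit).toHomotopyEquiv.trans
      (ContractibleSpace.hequiv_unit X).some.symm
  exact (hpoint.of_homotopyEquiv (singularChainHomotopyEquiv F hequiv)).of_iso
    (singularChainFunctorObjIso F X)

variable (F) in
lemma of_isEmpty (X : Type u) [TopologicalSpace X] [IsEmpty X] :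
    HasEulerChar (singularComplex F X) 0 0 := by
  refine of_exactAt fun i => ShortComplex.exact_of_isZero_X₂ _ ?_
  have : IsEmpty C(stdSimplex ℝ (Fin (i + 1)), X) :=
    ⟨fun σ => isEmptyElim (σ (stdSimplex.vertex 0))⟩
  have : Subsingleton ((singularComplex F X).X i) :=
    inferInstanceAs (Subsingleton (SingularChain F X (i + 1)))
  exact ModuleCat.isZero_of_subsingleton ((singularComplex F X).X i)

end HasEulerChar

end Contractible

section Sphere

universe u

/-- A subset of `W` viewed as a subspace of `W`. -/
def homeomorphPreimageVal {X : Type*} [TopologicalSpace X] {A W : Set X} (h : A ⊆ W) :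
    A ≃ₜ ((↑) ⁻¹' A : Set W) where
  toFun x := ⟨⟨x, h x.2⟩, x.2⟩
  invFun x := ⟨x.1.1, x.2⟩
  left_inv _ := rfl
  right_inv _ := rfl

lemma isOpen_setOf_exists_mem_ne_zero {ι : Type*} (S : Finset ι) :
    IsOpen {x : ι → ℝ | ∃ i ∈ S, x i ≠ 0} := by
  simp only [Set.ofPred_exists, Set.ofPred_and]
  exact isOpen_iUnion fun i => isOpen_const.inter
    (isOpen_ne_fun (continuous_apply i) continuous_const)

lemma starConvex_exists_mem_ne_zero_union_pos {ι : Type*} [DecidableEq ι] {S : Finset ι} {a : ι}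
    (ha : a ∉ S) {ε : ℝ} (hε : ε * ε = 1) :
    StarConvex ℝ (Pi.single a ε) ({x : ι → ℝ | ∃ i ∈ S, x i ≠ 0} ∪ {x | 0 < ε * x a}) := by
  rintro x hx s t hs ht hst
  have hval : ε * (s • Pi.single a ε + t • x : ι → ℝ) a = s + t * (ε * x a) := by
    simp only [Pi.add_apply, Pi.smul_apply, Pi.single_eq_same, smul_eq_mul]
    linear_combination s * hε
  rcases ht.eq_or_lt with rfl | ht
  · right
    rw [Set.mem_ofPred_eq, hval]
    linarith
  · rcases hx with ⟨i, hi, hxi⟩ | hxa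
    · exact Or.inl ⟨i, hi, by simp [ne_of_mem_of_not_mem hi ha, ht.ne', hxi]⟩
    · right
      rw [Set.mem_ofPred_eq, hval]
      exact add_pos_of_nonneg_of_pos hs (mul_pos ht hxa)

namespace HasEulerChar

variable {F : Type u} [Field F]

lemma union {X : Type u} [TopologicalSpace X] {U V : Set X} {a b c : ℕ} {α β γ : ℤ}
    (hU : IsOpen U) (hV : IsOpen V) (h₁ : HasEulerChar (singularComplex F U) a α)
    (h₂ : HasEulerChar (singularComplex F V) b β)
    (h₃ : HasEulerChar (singularComplex F ↥(U ∩ V)) c γ) :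
    HasEulerChar (singularComplex F ↥(U ∪ V)) (max (c + 1) (max a b)) (α + β - γ) :=
  mayerVietoris (U := (↑) ⁻¹' U) (V := (↑) ⁻¹' V) (hU.preimage continuous_subtype_val)
    (hV.preimage continuous_subtype_val) (Set.eq_univ_of_forall Subtype.prop)
    (h₁.of_homeomorph (homeomorphPreimageVal Set.subset_union_left))
    (h₂.of_homeomorph (homeomorphPreimageVal Set.subset_union_right))
    (h₃.of_homeomorph (homeomorphPreimageVal
      (Set.inter_subset_left.trans Set.subset_union_left)))

variable (F) in
lemma of_starConvex {E : Type u} [AddCommGroup E] [Module ℝ E] [TopologicalSpace E]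
    [ContinuousAdd E] [ContinuousSMul ℝ E] {s : Set E} {x : E} (h : StarConvex ℝ x s)
    (hx : x ∈ s) : HasEulerChar (singularComplex F s) 1 1 :=
  have := h.contractibleSpace ⟨x, hx⟩
  of_contractibleSpace F s

variable (F) in
/-- This set is homotopy equivalent to a sphere of dimension `#S - 1`. Adjoining a coordinate `a`
to `S` is suspension: each of the conditions `0 < x a` and `x a < 0` enlarges the set to a
star-shaped one, and the two enlargements meet in the set itself. -/
lemma exists_mem_ne_zero {ι : Type u} (S : Finset ι) :
    HasEulerChar (singularComplex F {x : ι → ℝ | ∃ i ∈ S, x i ≠ 0}) S.card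
      (1 - (-1) ^ S.card) := by
  classical
  induction S using Finset.induction_on with
  | empty =>
    have : IsEmpty {x : ι → ℝ | ∃ i ∈ (∅ : Finset ι), x i ≠ 0} := ⟨fun x => by simpa using x.2⟩
    simpa using of_isEmpty F {x : ι → ℝ | ∃ i ∈ (∅ : Finset ι), x i ≠ 0}
  | insert a S ha ih =>
    let P (ε : ℝ) : Set (ι → ℝ) := {x | ∃ i ∈ S, x i ≠ 0} ∪ {x | 0 < ε * x a}
    have hopen (ε : ℝ) : IsOpen (P ε) := (isOpen_setOf_exists_mem_ne_zero S).union
      (isOpen_lt continuous_const (continuous_const.mul (continuous_apply a)))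
    have hP (ε : ℝ) (hε : ε * ε = 1) : HasEulerChar (singularComplex F (P ε)) 1 1 :=
      of_starConvex F (starConvex_exists_mem_ne_zero_union_pos ha hε) (Or.inr (by simp [hε]))
    have hunion : P 1 ∪ P (-1) = {x : ι → ℝ | ∃ i ∈ insert a S, x i ≠ 0} := by
      simp only [P, ← Set.union_union_distrib_left, one_mul, neg_one_mul, neg_pos]
      ext x
      simp only [Set.mem_union, Set.mem_ofPred_eq, Finset.exists_mem_insert, or_comm,
        ← lt_or_lt_iff_ne]
    have hinter : P 1 ∩ P (-1) = {x : ι → ℝ | ∃ i ∈ S, x i ≠ 0} := by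
      rw [← Set.union_inter_distrib_left, Set.union_eq_left]
      rintro x ⟨hpos, hneg⟩
      simp only [Set.mem_ofPred_eq, one_mul, neg_one_mul, neg_pos] at hpos hneg
      exact absurd hpos hneg.not_gt
    have h := union (hopen 1) (hopen (-1)) (hP 1 (one_mul 1)) (hP (-1) (by norm_num))
      (hinter ▸ ih)
    rw [hunion] at h
    rw [Finset.card_insert_of_notMem ha]
    convert h using 1
    · simp
    · ring

end HasEulerChar

end Sphere

section Matrices

variable {l m n R : Type*}

lemma span_range_row_le_iff [Semiring R] [Fintype m] (A : Matrix m n R) (B : Matrix l n R) :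
    Submodule.span R (Set.range B.row) ≤ Submodule.span R (Set.range A.row) ↔
      ∃ g : Matrix l m R, g * A = B := by
  simp only [Submodule.span_le, Set.range_subset_iff, SetLike.mem_coe,
    ← range_vecMulLinear A, LinearMap.mem_range, Classical.skolem]
  exact exists_congr fun g => funext_iff.symm

lemma exists_perm_forall_ne_zero_of_det_ne_zero [CommRing R] [Fintype m] [DecidableEq m]
    {M : Matrix m m R} (h : M.det ≠ 0) : ∃ σ : Equiv.Perm m, ∀ a, M (σ a) a ≠ 0 := by
  rw [Matrix.det_apply] at h
  obtain ⟨σ, -, hσ⟩ := Finset.exists_ne_zero_of_sum_ne_zero h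
  exact ⟨σ, fun a ha =>
    hσ (smul_eq_zero_of_right _ (Finset.prod_eq_zero (Finset.mem_univ a) ha))⟩

lemma det_submatrix_update [CommRing R] [Fintype m] [DecidableEq m] {A : Matrix m n R} {c : m → n}
    (h : A.submatrix id c = 1) (a : m) (b : n) :
    (A.submatrix id (Function.update c a b)).det = A a b := by
  have hcol : A.submatrix id (Function.update c a b) =
      Matrix.updateCol 1 a (fun i => A i b) := by
    ext i j
    rcases eq_or_ne j a with rfl | hj
    · simp
    · simp [← h, hj]
  rw [hcol, ← Matrix.cramer_apply, Matrix.cramer_one]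
  rfl

lemma linearIndependent_row_of_submatrix_det_ne_zero [CommRing R] [IsDomain R] [Fintype m]
    [DecidableEq m] {A : Matrix m n R} {c : m → n} (h : (A.submatrix id c).det ≠ 0) :
    LinearIndependent R A.row :=
  LinearIndependent.of_comp (LinearMap.funLeft R R c)
    (Matrix.linearIndependent_rows_of_det_ne_zero h)

lemma exists_submatrix_det_ne_zero [Field R] [Fintype m] [DecidableEq m] [Finite n]
    {A : Matrix m n R} (hA : LinearIndependent R A.row) :
    ∃ c : m → n, (A.submatrix id c).det ≠ 0 := by
  have := Fintype.ofFinite n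
  obtain ⟨f, hf, -, hli⟩ := Submodule.exists_fun_fin_finrank_span_eq R (Set.range A.col)
  choose c hc using hf
  have hcard : Fintype.card m = Module.finrank R (Submodule.span R (Set.range A.col)) := by
    rw [← Matrix.rank_eq_finrank_span_cols, hA.rank_matrix]
  let e : m ≃ Fin (Module.finrank R (Submodule.span R (Set.range A.col))) :=
    Fintype.equivFinOfCardEq hcard
  have hcol : (A.submatrix id (c ∘ e)).col = f ∘ e := funext fun i => hc _
  refine ⟨c ∘ e, isUnit_iff_ne_zero.1 ((Matrix.isUnit_iff_isUnit_det _).1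
    (Matrix.linearIndependent_cols_iff_isUnit.1 ?_))⟩
  rw [hcol]
  exact hli.comp _ e.injective

open Classical in
/-- The matrix whose columns `c` form the identity matrix and whose remaining entries are `x`. -/
noncomputable def chartMatrix [Zero R] [One R] (c : m → n) (x : {b // b ∉ Set.range c} × m → R) :
    Matrix m n R :=
  Matrix.of fun a b => if h : b ∈ Set.range c then (if c a = b then 1 else 0) else x (⟨b, h⟩, a)

lemma chartMatrix_apply_of_notMem [Zero R] [One R] {c : m → n}
    (x : {b // b ∉ Set.range c} × m → R) (a : m) {b : n} (h : b ∉ Set.range c) :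
    chartMatrix c x a b = x (⟨b, h⟩, a) :=
  dif_neg h

lemma chartMatrix_submatrix [DecidableEq m] [Zero R] [One R] {c : m → n}
    (hc : Function.Injective c) (x : {b // b ∉ Set.range c} × m → R) :
    (chartMatrix c x).submatrix id c = 1 := by
  ext a b
  simp [chartMatrix, Matrix.one_apply, hc.eq_iff]

lemma linearIndependent_row_chartMatrix [Finite m] [CommRing R] [IsDomain R] {c : m → n}
    (hc : Function.Injective c) (x : {b // b ∉ Set.range c} × m → R) :
    LinearIndependent R (chartMatrix c x).row := by
  classical
  have := Fintype.ofFinite m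
  refine linearIndependent_row_of_submatrix_det_ne_zero (c := c) ?_
  rw [chartMatrix_submatrix hc x, Matrix.det_one]
  exact one_ne_zero

lemma chartMatrix_eq_of_submatrix_eq_one [DecidableEq m] [Zero R] [One R] {c : m → n}
    (hc : Function.Injective c) {A : Matrix m n R} (h : A.submatrix id c = 1) :
    chartMatrix c (fun p => A p.2 p.1) = A := by
  ext a b
  by_cases hb : b ∈ Set.range c
  · obtain ⟨i, rfl⟩ := hb
    rw [← chartMatrix_submatrix hc (fun p => A p.2 p.1)] at h
    exact (congr_fun₂ h a i).symm
  · exact chartMatrix_apply_of_notMem _ a hb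

lemma continuous_chartMatrix [TopologicalSpace R] [Zero R] [One R] (c : m → n) :
    Continuous (chartMatrix c : ({b // b ∉ Set.range c} × m → R) → Matrix m n R) := by
  refine continuous_matrix fun a b => ?_
  by_cases h : b ∈ Set.range c
  · simp only [chartMatrix, Matrix.of_apply, h, dite_true]
    exact continuous_const
  · simp only [chartMatrix_apply_of_notMem _ a h]
    exact continuous_apply _

end Matrices

section Chart

variable {k n : ℕ}

/-- Linearly independent `k`-tuples in `ℝⁿ`, as the rows of a matrix. The Grassmannian is by
definition a quotient of this space. -/
abbrev Frame (k n : ℕ) : Type := {A : Fin k → (Fin n → ℝ) // LinearIndependent ℝ A}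

namespace Grassmannian

/-- The plane spanned by a frame, as a point of the Grassmannian. -/
def mk (A : Frame k n) : Grassmannian k n := Quotient.mk (grassSetoid k n) A

lemma isQuotientMap_mk : Topology.IsQuotientMap (mk (k := k) (n := n)) := isQuotientMap_quotient_mk'

lemma mk_eq_mk {A B : Frame k n} : mk A = mk B ↔
    (∃ g : Matrix (Fin k) (Fin k) ℝ, g * Matrix.of A.1 = Matrix.of B.1) ∧
      ∃ g : Matrix (Fin k) (Fin k) ℝ, g * Matrix.of B.1 = Matrix.of A.1 := by
  rw [← span_range_row_le_iff, ← span_range_row_le_iff, and_comm, ← le_antisymm_iff]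
  exact Quotient.eq

/-- The square matrix of the columns `c` of a frame. -/
def columnMatrix (c : Fin k → Fin n) (A : Frame k n) : Matrix (Fin k) (Fin k) ℝ :=
  (Matrix.of A.1).submatrix id c

lemma columnMatrix_eq_mul {A B : Frame k n} {g : Matrix (Fin k) (Fin k) ℝ}
    (h : g * Matrix.of A.1 = Matrix.of B.1) (c : Fin k → Fin n) :
    columnMatrix c B = g * columnMatrix c A := by
  rw [columnMatrix, ← h]
  rfl

lemma continuous_columnMatrix (c : Fin k → Fin n) : Continuous (columnMatrix c) :=
  (show Continuous fun A : Frame k n => Matrix.of A.1 from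
    continuous_subtype_val).matrix_submatrix id c

lemma isOpen_det_columnMatrix_ne_zero (c : Fin k → Fin n) :
    IsOpen {A : Frame k n | (columnMatrix c A).det ≠ 0} :=
  isOpen_ne_fun (continuous_columnMatrix c).matrix_det continuous_const

/-- The planes with a nonzero Plücker coordinate at the columns `c`. -/
def minorSet (c : Fin k → Fin n) : Set (Grassmannian k n) :=
  mk '' {A | (columnMatrix c A).det ≠ 0}

lemma mk_mem_minorSet {c : Fin k → Fin n} {A : Frame k n} :
    mk A ∈ minorSet c ↔ (columnMatrix c A).det ≠ 0 := by
  refine ⟨?_, fun h => ⟨A, h, rfl⟩⟩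
  rintro ⟨B, hB, hAB⟩ hA
  obtain ⟨g, hg⟩ := (mk_eq_mk.1 hAB).2
  exact hB (by rw [columnMatrix_eq_mul hg, Matrix.det_mul, hA, mul_zero])

lemma isOpen_minorSet (c : Fin k → Fin n) : IsOpen (minorSet c) := by
  have hpre : mk ⁻¹' minorSet c = {A : Frame k n | (columnMatrix c A).det ≠ 0} :=
    Set.ext fun A => mk_mem_minorSet
  rw [← isQuotientMap_mk.isOpen_preimage, hpre]
  exact isOpen_det_columnMatrix_ne_zero c

variable {c : Fin k → Fin n}

/-- The affine chart of the Grassmannian centred at the coordinate plane of the columns `c`. -/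
noncomputable def chart (hc : Function.Injective c) (x : {b // b ∉ Set.range c} × Fin k → ℝ) :
    Grassmannian k n :=
  mk ⟨chartMatrix c x, linearIndependent_row_chartMatrix hc x⟩

lemma continuous_chart (hc : Function.Injective c) : Continuous (chart hc) :=
  isQuotientMap_mk.continuous.comp ((continuous_chartMatrix c).subtype_mk _)

/-- The inverse of the chart `chart hc`, as a function of a frame. -/
noncomputable def chartCoordinates (c : Fin k → Fin n) (A : Frame k n) :
    {b // b ∉ Set.range c} × Fin k → ℝ :=
  fun p => ((columnMatrix c A)⁻¹ * Matrix.of A.1) p.2 p.1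

lemma continuousOn_chartCoordinates (c : Fin k → Fin n) :
    ContinuousOn (chartCoordinates c) {A | (columnMatrix c A).det ≠ 0} := by
  have hA : Continuous fun A : Frame k n => Matrix.of A.1 := continuous_subtype_val
  unfold chartCoordinates
  simp only [Matrix.inv_def, Ring.inverse_eq_inv', Matrix.smul_mul]
  exact continuousOn_pi.2 fun p =>
    ((continuous_columnMatrix c).matrix_det.continuousOn.inv₀ fun A hA => hA).mul
      (((continuous_columnMatrix c).matrix_adjugate.matrix_mul hA).matrix_elem _ _).continuousOn

lemma chart_eq_mk_iff (hc : Function.Injective c) (x : {b // b ∉ Set.range c} × Fin k → ℝ)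
    (A : Frame k n) :
    chart hc x = mk A ↔ (columnMatrix c A).det ≠ 0 ∧ chartCoordinates c A = x := by
  rw [chart, mk_eq_mk]
  constructor
  · rintro ⟨-, g, hg⟩
    have hinv : g * columnMatrix c A = 1 :=
      (columnMatrix_eq_mul hg c).symm.trans (chartMatrix_submatrix hc x)
    refine ⟨Matrix.det_ne_zero_of_left_inverse hinv, funext fun p => ?_⟩
    rw [chartCoordinates, Matrix.inv_eq_left_inv hinv, hg]
    exact chartMatrix_apply_of_notMem x p.2 p.1.2
  · rintro ⟨h, rfl⟩
    have hunit : IsUnit (columnMatrix c A).det := isUnit_iff_ne_zero.2 h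
    have hchart : chartMatrix c (chartCoordinates c A) = (columnMatrix c A)⁻¹ * Matrix.of A.1 :=
      chartMatrix_eq_of_submatrix_eq_one hc (Matrix.nonsing_inv_mul _ hunit)
    refine ⟨⟨columnMatrix c A, ?_⟩, (columnMatrix c A)⁻¹, hchart.symm⟩
    exact (congr_arg (columnMatrix c A * ·) hchart).trans
      (Matrix.mul_nonsing_inv_cancel_left _ _ hunit)

lemma isOpenEmbedding_chart (hc : Function.Injective c) :
    Topology.IsOpenEmbedding (chart hc) := by
  refine .of_continuous_injective_isOpenMap (continuous_chart hc) (fun x y hxy => ?_) fun O hO => ?_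
  · exact ((chart_eq_mk_iff hc x _).1 rfl).2.symm.trans ((chart_eq_mk_iff hc y _).1 hxy.symm).2
  · have hpre : mk ⁻¹' (chart hc '' O) =
        {A : Frame k n | (columnMatrix c A).det ≠ 0} ∩ chartCoordinates c ⁻¹' O := by
      ext A
      simp [chart_eq_mk_iff, and_comm]
    rw [← isQuotientMap_mk.isOpen_preimage, hpre]
    exact (continuousOn_chartCoordinates c).isOpen_inter_preimage
      (isOpen_det_columnMatrix_ne_zero c) hO

lemma range_chart (hc : Function.Injective c) : Set.range (chart hc) = minorSet c := by
  ext p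
  obtain ⟨A, rfl⟩ := isQuotientMap_mk.surjective p
  simp [mk_mem_minorSet, chart_eq_mk_iff]

end Grassmannian

end Chart

section Filtration

variable {k n : ℕ}

namespace Grassmannian

/-- The sum of `2 ^ j` over the columns `j` in `c`. It orders the sets of columns so that the
Schubert cells can be attached one after the other. -/
def weight (c : Fin k → Fin n) : ℕ := ∑ a, 2 ^ (c a : ℕ)

lemma weight_le (c : Fin k → Fin n) : weight c ≤ k * 2 ^ n := by
  refine (Finset.sum_le_card_nsmul _ _ (2 ^ n) fun a _ => ?_).trans_eq (by simp)
  exact Nat.pow_le_pow_right two_pos (c a).2.le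

/-- The planes with a nonzero minor of weight less than `w`. -/
def weightSet (k n w : ℕ) : Set (Grassmannian k n) :=
  ⋃ c : {c : Fin k → Fin n // weight c < w}, minorSet c.1

lemma mem_weightSet {w : ℕ} {p : Grassmannian k n} :
    p ∈ weightSet k n w ↔ ∃ c, weight c < w ∧ p ∈ minorSet c := by
  simp [weightSet]

lemma isOpen_weightSet (k n w : ℕ) : IsOpen (weightSet k n w) :=
  isOpen_iUnion fun c => isOpen_minorSet c.1

lemma weightSet_zero (k n : ℕ) : weightSet k n 0 = ∅ :=
  Set.eq_empty_of_forall_notMem fun p hp => by simpa using mem_weightSet.1 hp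

lemma weightSet_eq_univ (k n : ℕ) : weightSet k n (k * 2 ^ n + 1) = Set.univ := by
  refine Set.eq_univ_of_forall fun p => ?_
  obtain ⟨A, rfl⟩ := isQuotientMap_mk.surjective p
  obtain ⟨c, hc⟩ := exists_submatrix_det_ne_zero (A := Matrix.of A.1) A.2
  exact mem_weightSet.2 ⟨c, Nat.lt_succ_of_le (weight_le c), mk_mem_minorSet.2 hc⟩

lemma injective_of_mem_minorSet {c : Fin k → Fin n} {p : Grassmannian k n}
    (hp : p ∈ minorSet c) : Function.Injective c := by
  obtain ⟨A, hA, rfl⟩ := hp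
  intro i j hij
  by_contra hne
  exact hA (Matrix.det_zero_of_column_eq hne fun a => by simp [columnMatrix, hij])

lemma minorSet_comp (c : Fin k → Fin n) (σ : Equiv.Perm (Fin k)) :
    minorSet (c ∘ σ) = minorSet c := by
  ext p
  obtain ⟨A, rfl⟩ := isQuotientMap_mk.surjective p
  have hσ : columnMatrix (c ∘ σ) A = (columnMatrix c A).submatrix id σ := rfl
  simp [mk_mem_minorSet, Matrix.det_permute', hσ]

/-- The set of columns in `c`, as natural numbers. -/
def columns (c : Fin k → Fin n) : Finset ℕ := Finset.univ.image fun a => (c a : ℕ)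

lemma columns_mem_powersetCard {c : Fin k → Fin n} (hc : Function.Injective c) :
    columns c ∈ Finset.powersetCard k (Finset.range n) := by
  refine Finset.mem_powersetCard.2 ⟨Finset.image_subset_iff.2 fun a _ => by simp, ?_⟩
  exact (Finset.card_image_of_injective _ (Fin.val_injective.comp hc)).trans (Finset.card_fin k)

lemma exists_columns_eq {I : Finset ℕ} (hI : I ∈ Finset.powersetCard k (Finset.range n)) :
    ∃ c : Fin k → Fin n, Function.Injective c ∧ columns c = I := by
  obtain ⟨hsub, hcard⟩ := Finset.mem_powersetCard.1 hI
  refine ⟨fun a => ⟨I.orderEmbOfFin hcard a,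
    Finset.mem_range.1 (hsub (Finset.orderEmbOfFin_mem I hcard a))⟩, fun a b hab => ?_, ?_⟩
  · exact (I.orderEmbOfFin hcard).injective (congr_arg Fin.val hab)
  · exact Finset.image_orderEmbOfFin_univ I hcard

lemma weight_eq_sum_columns {c : Fin k → Fin n} (hc : Function.Injective c) :
    weight c = ∑ i ∈ columns c, 2 ^ i :=
  (Finset.sum_image fun _ _ _ _ h => hc (Fin.ext h)).symm

lemma exists_perm_of_columns_eq {c d : Fin k → Fin n} (hc : Function.Injective c)
    (hd : Function.Injective d) (h : columns c = columns d) :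
    ∃ σ : Equiv.Perm (Fin k), c = d ∘ σ := by
  have hrange : Set.range c = Set.range d := by
    ext b
    simpa [columns, Fin.val_inj] using Finset.ext_iff.1 h b
  refine ⟨(Equiv.ofInjective c hc).trans
    ((Equiv.setCongr hrange).trans (Equiv.ofInjective d hd).symm), funext fun i => ?_⟩
  exact (congr_arg Subtype.val ((Equiv.ofInjective d hd).apply_symm_apply
    (Equiv.setCongr hrange (Equiv.ofInjective c hc i)))).symm

lemma minorSet_eq_of_weight_eq {c d : Fin k → Fin n} (hc : Function.Injective c)
    (hd : Function.Injective d) (h : weight c = weight d) : minorSet c = minorSet d := by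
  rw [weight_eq_sum_columns hc, weight_eq_sum_columns hd] at h
  obtain ⟨σ, rfl⟩ := exists_perm_of_columns_eq hc hd (Finset.geomSum_injective le_rfl h)
  exact minorSet_comp d σ

lemma weightSet_succ {c : Fin k → Fin n} (hc : Function.Injective c) :
    weightSet k n (weight c + 1) = weightSet k n (weight c) ∪ minorSet c := by
  ext p
  simp only [mem_weightSet, Set.mem_union, Nat.lt_succ_iff_lt_or_eq]
  constructor
  · rintro ⟨d, hd | hd, hp⟩
    · exact Or.inl ⟨d, hd, hp⟩
    · exact Or.inr (minorSet_eq_of_weight_eq (injective_of_mem_minorSet hp) hc hd ▸ hp)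
  · rintro (⟨d, hd, hp⟩ | hp)
    · exact ⟨d, Or.inl hd, hp⟩
    · exact ⟨c, Or.inr rfl, hp⟩

lemma weightSet_succ_of_forall_ne {w : ℕ}
    (h : ∀ c : Fin k → Fin n, Function.Injective c → weight c ≠ w) :
    weightSet k n (w + 1) = weightSet k n w := by
  ext p
  simp only [mem_weightSet, Nat.lt_succ_iff_lt_or_eq]
  exact exists_congr fun c => and_congr_left fun hp =>
    or_iff_left (h c (injective_of_mem_minorSet hp))

open Classical in
/-- The positions to the left of the pivots of `c`, outside its columns: the Schubert cell of `c`
is the part of the chart where the entries at these positions vanish. -/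
noncomputable def leftEntries (c : Fin k → Fin n) :
    Finset ({b // b ∉ Set.range c} × Fin k) :=
  {p | p.1.1 < c p.2}

lemma mem_leftEntries {c : Fin k → Fin n} {p : {b // b ∉ Set.range c} × Fin k} :
    p ∈ leftEntries c ↔ p.1.1 < c p.2 :=
  Finset.mem_filter_univ _

lemma weight_le_of_forall_leftEntries_eq_zero {c d : Fin k → Fin n}
    {x : {b // b ∉ Set.range c} × Fin k → ℝ} (hx : ∀ p ∈ leftEntries c, x p = 0)
    (hd : ((chartMatrix c x).submatrix id d).det ≠ 0) : weight c ≤ weight d := by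
  obtain ⟨σ, hσ⟩ := exists_perm_forall_ne_zero_of_det_ne_zero hd
  have hle (a : Fin k) : c (σ a) ≤ d a := by
    by_contra! hlt
    refine hσ a ?_
    by_cases hda : d a ∈ Set.range c
    · obtain ⟨j, hj⟩ := hda
      simp [chartMatrix, ← hj, (hj ▸ hlt.ne' : c (σ a) ≠ c j)]
    · exact (chartMatrix_apply_of_notMem x (σ a) hda).trans (hx _ (mem_leftEntries.2 hlt))
  rw [weight, ← Equiv.sum_comp σ]
  exact Finset.sum_le_sum fun a _ => Nat.pow_le_pow_right two_pos (hle a)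

lemma weight_update_lt {c : Fin k → Fin n} {a : Fin k} {b : Fin n} (h : b < c a) :
    weight (Function.update c a b) < weight c := by
  refine Finset.sum_lt_sum (fun i _ => ?_) ⟨a, Finset.mem_univ a, ?_⟩
  · rcases eq_or_ne i a with rfl | hi
    · rw [Function.update_self]
      exact Nat.pow_le_pow_right two_pos h.le
    · rw [Function.update_of_ne hi]
  · rw [Function.update_self]
    exact Nat.pow_lt_pow_right one_lt_two h

lemma chart_mem_weightSet_iff {c : Fin k → Fin n} (hc : Function.Injective c)
    (x : {b // b ∉ Set.range c} × Fin k → ℝ) :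
    chart hc x ∈ weightSet k n (weight c) ↔ ∃ p ∈ leftEntries c, x p ≠ 0 := by
  simp only [mem_weightSet, chart, mk_mem_minorSet]
  constructor
  · rintro ⟨d, hlt, hd⟩
    by_contra! hx
    exact hlt.not_ge (weight_le_of_forall_leftEntries_eq_zero hx hd)
  · rintro ⟨⟨⟨b, hb⟩, a⟩, hba, hx⟩
    refine ⟨Function.update c a b, weight_update_lt (mem_leftEntries.1 hba), ?_⟩
    have hminor := det_submatrix_update (chartMatrix_submatrix hc x) a b
    rw [chartMatrix_apply_of_notMem x a hb] at hminor
    exact hminor.trans_ne hx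

end Grassmannian

end Filtration

section Inversions

/-- The number of pairs `b < a` of natural numbers with `a ∈ I` and `b ∉ I`, which is the
codimension of the Schubert cell of `I`. -/
def inversions (I : Finset ℕ) : ℕ := ∑ a ∈ I, (Finset.range a \ I).card

lemma inversions_insert {n : ℕ} {I : Finset ℕ} (hI : I ⊆ Finset.range n) :
    inversions (insert n I) = (n - I.card) + inversions I := by
  have hn : n ∉ I := fun h => by simpa using hI h
  have hsdiff (a : ℕ) (ha : a ≤ n) : Finset.range a \ insert n I = Finset.range a \ I :=
    Finset.sdiff_insert_of_notMem (by simpa using ha) I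
  rw [inversions, Finset.sum_insert hn, hsdiff n le_rfl, Finset.card_sdiff_of_subset hI,
    Finset.card_range]
  exact congr_arg _ (Finset.sum_congr rfl fun a ha =>
    congr_arg _ (hsdiff a (Finset.mem_range.1 (hI ha)).le))

lemma inversions_le {n k : ℕ} {I : Finset ℕ} (hI : I ∈ Finset.powersetCard k (Finset.range n)) :
    inversions I ≤ k * (n - k) := by
  obtain ⟨hsub, rfl⟩ := Finset.mem_powersetCard.1 hI
  refine Finset.sum_le_card_nsmul _ _ (n - I.card) fun a ha => ?_
  calc (Finset.range a \ I).card ≤ (Finset.range n \ I).card :=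
        Finset.card_le_card (Finset.sdiff_subset_sdiff
          (Finset.range_mono (Finset.mem_range.1 (hsub ha)).le) le_rfl)
    _ = n - I.card := by rw [Finset.card_sdiff_of_subset hsub, Finset.card_range]

lemma sum_powersetCard_insert {α M : Type*} [DecidableEq α] [AddCommMonoid M] {s : Finset α} {a : α}
    (ha : a ∉ s) (k : ℕ) (f : Finset α → M) :
    ∑ t ∈ Finset.powersetCard (k + 1) (insert a s), f t =
      ∑ t ∈ Finset.powersetCard (k + 1) s, f t +
        ∑ t ∈ Finset.powersetCard k s, f (insert a t) := by
  have hmem {m : ℕ} {t : Finset α} (ht : t ∈ Finset.powersetCard m s) : a ∉ t :=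
    fun h => ha ((Finset.mem_powersetCard.1 ht).1 h)
  rw [Finset.powersetCard_succ_insert ha, Finset.sum_union, Finset.sum_image]
  · intro t ht u hu htu
    rw [← Finset.erase_insert (hmem ht), htu, Finset.erase_insert (hmem hu)]
  · refine Finset.disjoint_left.2 fun t ht ht' => hmem ht ?_
    obtain ⟨u, -, rfl⟩ := Finset.mem_image.1 ht'
    exact Finset.mem_insert_self a u

/-- The `q`-Pascal recursion for Gaussian binomial coefficients. -/
lemma sum_pow_inversions_succ {R : Type*} [Semiring R] (q : R) (n k : ℕ) :
    ∑ I ∈ Finset.powersetCard (k + 1) (Finset.range (n + 1)), q ^ inversions I =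
      ∑ I ∈ Finset.powersetCard (k + 1) (Finset.range n), q ^ inversions I +
        q ^ (n - k) * ∑ I ∈ Finset.powersetCard k (Finset.range n), q ^ inversions I := by
  rw [Finset.range_add_one, sum_powersetCard_insert Finset.notMem_range_self, Finset.mul_sum]
  refine congr_arg _ (Finset.sum_congr rfl fun I hI => ?_)
  obtain ⟨hsub, rfl⟩ := Finset.mem_powersetCard.1 hI
  rw [inversions_insert hsub, pow_add]

/-- The value at `q = -1` of the Gaussian binomial coefficient of `n` and `k`. -/
def gaussBinomNegOne (n k : ℕ) : ℤ :=
  if k % 2 = 1 ∧ n % 2 = 0 then 0 else ((n / 2).choose (k / 2) : ℤ)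

lemma gaussBinomNegOne_zero_right (n : ℕ) : gaussBinomNegOne n 0 = 1 := by
  simp [gaussBinomNegOne]

lemma gaussBinomNegOne_even_even (m j : ℕ) : gaussBinomNegOne (2 * m) (2 * j) = m.choose j := by
  simp [gaussBinomNegOne]

lemma gaussBinomNegOne_even_odd (m j : ℕ) : gaussBinomNegOne (2 * m) (2 * j + 1) = 0 :=
  if_pos (by omega)

lemma gaussBinomNegOne_odd_left (m k : ℕ) :
    gaussBinomNegOne (2 * m + 1) k = m.choose (k / 2) := by
  rw [gaussBinomNegOne, if_neg (by omega), show (2 * m + 1) / 2 = m by omega]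

lemma gaussBinomNegOne_zero_succ (k : ℕ) : gaussBinomNegOne 0 (k + 1) = 0 := by
  obtain ⟨j, rfl | rfl⟩ := Nat.even_or_odd' k
  · exact gaussBinomNegOne_even_odd 0 j
  · exact gaussBinomNegOne_even_even 0 (j + 1)

lemma gaussBinomNegOne_succ_succ (n k : ℕ) :
    gaussBinomNegOne (n + 1) (k + 1) =
      gaussBinomNegOne n (k + 1) + (-1) ^ (n - k) * gaussBinomNegOne n k := by
  have hhalf (j : ℕ) : (2 * j + 1) / 2 = j := by omega
  obtain ⟨m, rfl | rfl⟩ := Nat.even_or_odd' n <;> obtain ⟨j, rfl | rfl⟩ := Nat.even_or_odd' k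
  · rw [gaussBinomNegOne_odd_left, gaussBinomNegOne_even_odd, gaussBinomNegOne_even_even, hhalf,
      ← Nat.mul_sub, pow_mul, neg_one_sq, one_pow, one_mul, zero_add]
  · rw [gaussBinomNegOne_odd_left, gaussBinomNegOne_even_odd, mul_zero, add_zero,
      show 2 * j + 1 + 1 = 2 * (j + 1) by ring, gaussBinomNegOne_even_even,
      Nat.mul_div_cancel_left _ two_pos]
  · rw [show 2 * m + 1 + 1 = 2 * (m + 1) by ring, gaussBinomNegOne_even_odd,
      gaussBinomNegOne_odd_left, gaussBinomNegOne_odd_left, hhalf,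
      Nat.mul_div_cancel_left _ two_pos]
    rcases le_or_gt j m with hjm | hjm
    · rw [show 2 * m + 1 - 2 * j = 2 * (m - j) + 1 by omega, pow_succ, pow_mul, neg_one_sq,
        one_pow]
      ring
    · rw [Nat.choose_eq_zero_of_lt hjm]
      simp
  · rw [show 2 * m + 1 + 1 = 2 * (m + 1) by ring, show 2 * j + 1 + 1 = 2 * (j + 1) by ring,
      gaussBinomNegOne_even_even, gaussBinomNegOne_odd_left, gaussBinomNegOne_odd_left, hhalf,
      Nat.mul_div_cancel_left _ two_pos, Nat.add_sub_add_right, ← Nat.mul_sub, pow_mul,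
      neg_one_sq, one_pow, one_mul, Nat.choose_succ_succ, Nat.cast_add, add_comm]

lemma sum_neg_one_pow_inversions (n k : ℕ) :
    ∑ I ∈ Finset.powersetCard k (Finset.range n), (-1 : ℤ) ^ inversions I =
      gaussBinomNegOne n k := by
  induction n generalizing k with
  | zero =>
    rcases k with _ | k
    · simp [inversions, gaussBinomNegOne_zero_right]
    · rw [Finset.powersetCard_eq_empty.2 (by simp), Finset.sum_empty, gaussBinomNegOne_zero_succ]
  | succ n ih =>
    rcases k with _ | k
    · simp [inversions, gaussBinomNegOne_zero_right]
    · rw [sum_pow_inversions_succ, ih, ih, gaussBinomNegOne_succ_succ]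

end Inversions

section EulerCharacteristic

variable {k n : ℕ}

/-- The sets of `k` elements of `{0, …, n - 1}` whose characteristic sequence, read as a binary
number, is less than `w`. They label the Schubert cells in `Grassmannian.weightSet k n w`. -/
def weightSubsets (k n w : ℕ) : Finset (Finset ℕ) :=
  {I ∈ Finset.powersetCard k (Finset.range n) | ∑ i ∈ I, 2 ^ i < w}

lemma weightSubsets_zero (k n : ℕ) : weightSubsets k n 0 = ∅ := by
  simp [weightSubsets]

lemma weightSubsets_succ {I : Finset ℕ} (hI : I ∈ Finset.powersetCard k (Finset.range n)) :
    weightSubsets k n (∑ i ∈ I, 2 ^ i + 1) = insert I (weightSubsets k n (∑ i ∈ I, 2 ^ i)) := by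
  ext J
  have hJ : ∑ i ∈ J, 2 ^ i = ∑ i ∈ I, 2 ^ i ↔ J = I := (Finset.geomSum_injective le_rfl).eq_iff
  simp only [weightSubsets, Finset.mem_filter, Finset.mem_insert, Nat.lt_succ_iff_lt_or_eq, hJ]
  constructor
  · rintro ⟨hmem, hlt | rfl⟩
    · exact Or.inr ⟨hmem, hlt⟩
    · exact Or.inl rfl
  · rintro (rfl | ⟨hmem, hlt⟩)
    · exact ⟨hI, Or.inr rfl⟩
    · exact ⟨hmem, Or.inl hlt⟩

lemma weightSubsets_succ_of_forall_ne {w : ℕ}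
    (h : ∀ I ∈ Finset.powersetCard k (Finset.range n), ∑ i ∈ I, 2 ^ i ≠ w) :
    weightSubsets k n (w + 1) = weightSubsets k n w :=
  Finset.filter_congr fun I hI => by rw [Nat.lt_succ_iff_lt_or_eq, or_iff_left (h I hI)]

namespace Grassmannian

lemma weightSubsets_eq_powersetCard (k n : ℕ) :
    weightSubsets k n (k * 2 ^ n + 1) = Finset.powersetCard k (Finset.range n) := by
  refine Finset.filter_true_of_mem fun I hI => ?_
  obtain ⟨c, hc, rfl⟩ := exists_columns_eq hI
  rw [← weight_eq_sum_columns hc]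
  exact Nat.lt_succ_of_le (weight_le c)

lemma card_leftEntries {c : Fin k → Fin n} (hc : Function.Injective c) :
    (leftEntries c).card = inversions (columns c) := by
  rw [inversions, ← Finset.card_sigma]
  refine Finset.card_nbij (fun p => ⟨(c p.2 : ℕ), (p.1.1 : ℕ)⟩) (fun p hp => ?_)
    (fun p _ q _ h => ?_) fun q hq => ?_
  · have hp' := p.1.2
    simp_all [mem_leftEntries, columns, Fin.val_inj]
  · simp only [Sigma.mk.injEq, heq_eq_eq, Fin.val_inj, hc.eq_iff] at h
    exact Prod.ext (Subtype.ext h.2) h.1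
  · obtain ⟨a, b⟩ := q
    simp only [columns, Finset.coe_sigma, Set.mem_sigma_iff, Finset.mem_coe, Finset.mem_image,
      Finset.mem_univ, true_and, Finset.mem_sdiff, Finset.mem_range, not_exists] at hq
    obtain ⟨⟨i, rfl⟩, hlt, hne⟩ := hq
    have hb : ⟨b, hlt.trans (c i).2⟩ ∉ Set.range c := fun ⟨j, hj⟩ => hne j (congr_arg Fin.val hj)
    exact ⟨(⟨_, hb⟩, i), Finset.mem_coe.2 (mem_leftEntries.2 hlt), rfl⟩

section Field

variable (F : Type) [Field F]

lemma hasEulerChar_minorSet {c : Fin k → Fin n} (hc : Function.Injective c) :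
    HasEulerChar (singularComplex F (minorSet c)) 1 1 :=
  (HasEulerChar.of_contractibleSpace F _).of_homeomorph
    ((isOpenEmbedding_chart hc).isEmbedding.toHomeomorph.trans (.setCongr (range_chart hc)))

lemma hasEulerChar_weightSet_inter_minorSet {c : Fin k → Fin n} (hc : Function.Injective c) :
    HasEulerChar (singularComplex F ↥(weightSet k n (weight c) ∩ minorSet c))
      (inversions (columns c)) (1 - (-1) ^ inversions (columns c)) := by
  have hpre : {x | ∃ p ∈ leftEntries c, x p ≠ 0} =
      chart hc ⁻¹' (weightSet k n (weight c) ∩ minorSet c) := by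
    rw [← range_chart hc, Set.preimage_inter_range]
    exact Set.ext fun x => (chart_mem_weightSet_iff hc x).symm
  rw [← card_leftEntries hc]
  exact (HasEulerChar.exists_mem_ne_zero F (leftEntries c)).of_homeomorph
    ((Homeomorph.setCongr hpre).trans
      ((isOpenEmbedding_chart hc).isEmbedding.homeomorphOfSubsetRange
        (Set.inter_subset_right.trans (range_chart hc).ge)))

variable {F}

lemma hasEulerChar_weightSet_succ {c : Fin k → Fin n} (hc : Function.Injective c) {χ : ℤ}
    (h : HasEulerChar (singularComplex F (weightSet k n (weight c))) (k * (n - k) + 1) χ) :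
    HasEulerChar (singularComplex F (weightSet k n (weight c + 1))) (k * (n - k) + 1)
      ((-1) ^ inversions (columns c) + χ) := by
  have hunion := h.union (isOpen_weightSet k n _) (isOpen_minorSet c) (hasEulerChar_minorSet F hc)
    (hasEulerChar_weightSet_inter_minorSet F hc)
  have hdim := inversions_le (columns_mem_powersetCard hc)
  rw [← weightSet_succ hc, show χ + 1 - (1 - (-1) ^ inversions (columns c)) =
    (-1) ^ inversions (columns c) + χ by ring] at hunion
  exact hunion.mono (by omega)

variable (F)

lemma hasEulerChar_weightSet (k n w : ℕ) :
    HasEulerChar (singularComplex F (weightSet k n w)) (k * (n - k) + 1)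
      (∑ I ∈ weightSubsets k n w, (-1) ^ inversions I) := by
  induction w with
  | zero =>
    have : IsEmpty (weightSet k n 0) := Set.isEmpty_coe_sort.2 (weightSet_zero k n)
    rw [weightSubsets_zero, Finset.sum_empty]
    exact (HasEulerChar.of_isEmpty F (weightSet k n 0)).mono (Nat.zero_le _)
  | succ w ih =>
    by_cases h : ∃ c : Fin k → Fin n, Function.Injective c ∧ weight c = w
    · obtain ⟨c, hc, rfl⟩ := h
      have hnotMem : columns c ∉ weightSubsets k n (weight c) := by
        simp [weightSubsets, weight_eq_sum_columns hc]
      have hsucc : weightSubsets k n (weight c + 1) =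
          insert (columns c) (weightSubsets k n (weight c)) := by
        rw [weight_eq_sum_columns hc, weightSubsets_succ (columns_mem_powersetCard hc)]
      rw [hsucc, Finset.sum_insert hnotMem]
      exact hasEulerChar_weightSet_succ hc ih
    · push Not at h
      rw [weightSet_succ_of_forall_ne h, weightSubsets_succ_of_forall_ne]
      · exact ih
      · intro I hI
        obtain ⟨c, hc, rfl⟩ := exists_columns_eq hI
        exact weight_eq_sum_columns hc ▸ h c hc

lemma hasEulerChar (k n : ℕ) :
    HasEulerChar (singularComplex F (Grassmannian k n)) (k * (n - k) + 1)
      (gaussBinomNegOne n k) := by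
  have h := hasEulerChar_weightSet F k n (k * 2 ^ n + 1)
  rw [weightSubsets_eq_powersetCard, sum_neg_one_pow_inversions] at h
  exact h.of_homeomorph
    ((Homeomorph.setCongr (weightSet_eq_univ k n)).trans (Homeomorph.Set.univ _))

end Field

end Grassmannian

end EulerCharacteristic

section Duality

open Opposite

universe u

lemma exact_map_linearYoneda {F : Type u} [Field F] {S : ShortComplex (ModuleCat.{u} F)ᵒᵖ}
    (hS : S.Exact) :
    (S.map ((linearYoneda F (ModuleCat.{u} F)).obj (ModuleCat.of F F))).Exact := by
  rw [ShortComplex.moduleCat_exact_iff]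
  intro (x : S.X₂.unop ⟶ ModuleCat.of F F) (hx : S.g.unop ≫ x = 0)
  have hker : x.hom ∈ (LinearMap.ker S.f.unop.hom).dualAnnihilator := by
    refine (Submodule.mem_dualAnnihilator _).2 fun z hz => ?_
    obtain ⟨w, rfl⟩ := (ShortComplex.moduleCat_exact_iff _).1 hS.unop z hz
    exact LinearMap.congr_fun (congr_arg ModuleCat.Hom.hom hx) w
  rw [← LinearMap.range_dualMap_eq_dualAnnihilator_ker] at hker
  obtain ⟨y, hy⟩ := hker
  exact ⟨ModuleCat.ofHom y, ModuleCat.hom_ext hy⟩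

lemma finrank_homology_map_linearYoneda_op {F : Type u} [Field F] {ι : Type*}
    {c : ComplexShape ι} (K : HomologicalComplex (ModuleCat.{u} F) c) (i : ι) :
    Module.finrank F (((((linearYoneda F (ModuleCat.{u} F)).obj
      (ModuleCat.of F F)).mapHomologicalComplex _).obj K.op).homology i) =
      Module.finrank F (K.homology i) := by
  let D := (linearYoneda F (ModuleCat.{u} F)).obj (ModuleCat.of F F)
  obtain ⟨_, _⟩ := (D.exact_tfae.out 1 3).1 fun S hS => exact_map_linearYoneda hS
  let e : ((D.mapHomologicalComplex _).obj K.op).homology i ≅ D.obj (op (K.homology i)) :=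
    (K.op.sc i).mapHomologyIso D ≪≫ D.mapIso (K.homologyOp i)
  rw [e.toLinearEquiv.finrank_eq]
  exact ModuleCat.homLinearEquiv.finrank_eq.trans Subspace.dual_finrank_eq

lemma finrank_singularCohomology (F : Type) [Field F] (X : TopCat) (i : ℕ) :
    Module.finrank F (singularCohomology F X i) =
      Module.finrank F ((singularChainComplex F X).homology i) :=
  finrank_homology_map_linearYoneda_op _ _

end Duality

theorem eulerChar_grassmannian_general (F : Type) [Field F] (k n : ℕ) :
    (∀ i : ℕ, k * (n - k) < i →
      Module.finrank F (singularCohomology F (TopCat.of (Grassmannian k n)) i) = 0) ∧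
    (∑ i ∈ Finset.range (k * (n - k) + 1), (-1 : ℤ) ^ i *
        (Module.finrank F (singularCohomology F (TopCat.of (Grassmannian k n)) i) : ℤ))
      = if k % 2 = 1 ∧ n % 2 = 0 then 0 else ((n / 2).choose (k / 2) : ℤ) := by
  have h : HasEulerChar (singularChainComplex F (TopCat.of (Grassmannian k n)))
      (k * (n - k) + 1) (gaussBinomNegOne n k) :=
    (Grassmannian.hasEulerChar F k n).of_iso (singularChainFunctorObjIso F _).symm
  simp only [finrank_singularCohomology]
  exact ⟨h.finrank_eq_zero, h.sum_range_eq⟩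

/-- The Euler characteristic of the real Grassmannian `Gr(k, n)` (the alternating sum
of its rational Betti numbers; the cohomology vanishes above the dimension `k(n-k)`)
equals `C(⌊n/2⌋, ⌊k/2⌋)` when `(k, n)` is of the form `(2j, 2m)`, `(2j, 2m+1)` or
`(2j+1, 2m+1)`, and equals `0` when `(k, n) = (2j+1, 2m)`. -/
theorem eulerChar_grassmannian (k n : ℕ) (hkn : k ≤ n) :
    (∀ i : ℕ, k * (n - k) < i →
      Module.finrank ℚ (singularCohomology ℚ (TopCat.of (Grassmannian k n)) i) = 0) ∧
    (∑ i ∈ Finset.range (k * (n - k) + 1), (-1 : ℤ) ^ i *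
        (Module.finrank ℚ (singularCohomology ℚ (TopCat.of (Grassmannian k n)) i) : ℤ))
      = if k % 2 = 1 ∧ n % 2 = 0 then 0 else ((n / 2).choose (k / 2) : ℤ) :=
  eulerChar_grassmannian_general ℚ k n
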